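/- Boundedness of the electromagnetic field under a momentum support bound: Let τ > 0, let f ∈ C¹([0,τ)×ℝ³×ℝ³) and (E,B) ∈ C¹([0,τ)×ℝ³; ℝ³×ℝ³) be a solution of the relativistic Vlasov–Maxwell system with initial data f(0,·,·) = f^in, where f^in ∈ C¹(ℝ³×ℝ³) is nonnegative with compact support, and (E,B)(0,·) = (E^in, B^in) with E^in, B^in ∈ C²(ℝ³;ℝ³) compactly supported and satisfying div_x E^in = ∫_{ℝ³} f^in dξ and div_x B^in = 0. If sup_{t∈[0,τ)} R_f(t) < +∞, then sup_{(t,x)∈[0,τ)×ℝ³} ( |E(t,x)| + |B(t,x)| ) < +∞. -/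

import Mathlib

open MeasureTheory Real Set Filter Metric RealInnerProductSpace
open scoped ENNReal NNReal Topology

noncomputable section

/-- Physical space `ℝ³` with its Euclidean structure. -/
abbrev E3 : Type := EuclideanSpace ℝ (Fin 3)

/-- The `i`-th standard basis vector of `ℝ³`. -/
def e3 (i : Fin 3) : E3 := EuclideanSpace.single i 1

/-- The relativistic velocity `v(ξ) = ξ/√(1+|ξ|²)`. -/
def vrel (ξ : E3) : E3 := (Real.sqrt (1 + ‖ξ‖ ^ 2))⁻¹ • ξ

/-- Cross product on `ℝ³`. -/
def cross3 (a b : E3) : E3 :=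
  (WithLp.equiv 2 (Fin 3 → ℝ)).symm
    ![a 1 * b 2 - a 2 * b 1, a 2 * b 0 - a 0 * b 2, a 0 * b 1 - a 1 * b 0]

/-- Partial derivative in the `i`-th coordinate direction. -/
def pd3 (u : E3 → ℝ) (i : Fin 3) (x : E3) : ℝ := fderiv ℝ u x (e3 i)

/-- Divergence of a vector field on `ℝ³`. -/
def divg (F : E3 → E3) (x : E3) : ℝ := ∑ i : Fin 3, pd3 (fun y => F y i) i x

/-- Curl of a vector field on `ℝ³`. -/
def curl3 (F : E3 → E3) (x : E3) : E3 :=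
  (WithLp.equiv 2 (Fin 3 → ℝ)).symm
    ![pd3 (fun y => F y 2) 1 x - pd3 (fun y => F y 1) 2 x,
      pd3 (fun y => F y 0) 2 x - pd3 (fun y => F y 2) 0 x,
      pd3 (fun y => F y 1) 0 x - pd3 (fun y => F y 0) 1 x]

/-- `W^{1,∞}_{x,ξ}` norm (as an extended real) of `f(t,·,·)`. -/
def WfNorm (f : ℝ → E3 → E3 → ℝ) (t : ℝ) : ℝ≥0∞ :=
  ⨆ p : E3 × E3,
    ((‖f t p.1 p.2‖₊ : ℝ≥0∞) + (‖fderiv ℝ (fun q : E3 × E3 => f t q.1 q.2) p‖₊ : ℝ≥0∞))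

/-- `W^{1,∞}_x` norm (as an extended real) of a field `F(t,·)`. -/
def WFieldNorm (F : ℝ → E3 → E3) (t : ℝ) : ℝ≥0∞ :=
  ⨆ x : E3, ((‖F t x‖₊ : ℝ≥0∞) + (‖fderiv ℝ (F t) x‖₊ : ℝ≥0∞))

/-- The momentum support radius
`R_f(t) = inf { r > 0 | f(t,x,ξ) = 0 for all x and all |ξ| > r }` (with value `∞` if no
such radius exists). -/
def Rsupp (f : ℝ → E3 → E3 → ℝ) (t : ℝ) : ℝ≥0∞ :=
  sInf {r : ℝ≥0∞ | 0 < r ∧ ∀ x ξ : E3, r < (‖ξ‖₊ : ℝ≥0∞) → f t x ξ = 0}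

/-!
Each component of `E` satisfies a wave equation whose source contains derivatives of the moments of
`f`. Testing the equations against a mollified retarded kernel of apex `(T, x₁)` and integrating by
parts moves every derivative onto the kernel: the derivatives of the sources meet
`∂ₜ + v(ξ)·∇ₓ`, which the transport equation trades for `-(E + v × B)·∇_ξ`. As `|v(ξ)| < 1` is
bounded away from `1` on the momentum support, the resulting weights are bounded, and the kernel
has bounded mass. Hence `|E(T, x₁)|` is at most a constant plus a time integral of the supremum of
`|E| + |B|` over the backward cone below `(T, x₁)`. The duality `(E, B) ↦ (B, -E)` gives the same
for `B`, and Grönwall's inequality on backward cones concludes.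
-/

section Integration

variable {V : Type*} [NormedAddCommGroup V] [NormedSpace ℝ V] [MeasurableSpace V] [BorelSpace V]
  (μ : Measure V)

theorem integral_fderiv_apply_eq_zero [FiniteDimensional ℝ V] [μ.IsAddHaarMeasure] {h : V → ℝ}
    (hh : ContDiff ℝ 1 h) (hc : HasCompactSupport h) (v : V) : ∫ x, fderiv ℝ h x v ∂μ = 0 := by
  have hint : Integrable (fun x => fderiv ℝ h x v) μ :=
    ((hh.continuous_fderiv one_ne_zero).clm_apply continuous_const).integrable_of_hasCompactSupport
      (hc.fderiv_apply (𝕜 := ℝ) v)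
  have := integral_mul_fderiv_eq_neg_fderiv_mul_of_integrable (μ := μ) (f := fun _ : V => (1 : ℝ))
    (g := h) (v := v) (by simp) (by simpa using hint)
    (by simpa using hh.continuous.integrable_of_hasCompactSupport hc)
    (fun x _ => differentiableAt_const _) (fun x _ => hh.differentiable one_ne_zero x)
  simpa using this

theorem hasDerivAt_integral_of_contDiffOn [IsFiniteMeasureOnCompacts μ] {U : Set ℝ} (hU : IsOpen U)
    {K : Set V} (hK : IsCompact K) {h : ℝ → V → ℝ}
    (hh : ContDiffOn ℝ 1 (Function.uncurry h) (U ×ˢ univ))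
    (h0 : ∀ t ∈ U, ∀ x, x ∉ K → h t x = 0) {t : ℝ} (ht : t ∈ U) :
    Integrable (fun x => deriv (fun s => h s x) t) μ ∧
      HasDerivAt (fun s => ∫ x, h s x ∂μ) (∫ x, deriv (fun s => h s x) t ∂μ) t := by
  have hUV : IsOpen (U ×ˢ (univ : Set V)) := hU.prod isOpen_univ
  have hslice (s : ℝ) (hs : s ∈ U) : Continuous (h s) :=
    continuousOn_univ.1 (hh.continuousOn.comp (f := fun x => (s, x)) (by fun_prop)
      fun x _ => ⟨hs, mem_univ _⟩)
  have hderiv (s : ℝ) (hs : s ∈ U) (x : V) :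
      HasDerivAt (fun s => h s x) (fderiv ℝ (Function.uncurry h) (s, x) (1, 0)) s := by
    have hd : DifferentiableAt ℝ (Function.uncurry h) (s, x) :=
      (hh.differentiableOn one_ne_zero).differentiableAt (hUV.mem_nhds ⟨hs, mem_univ x⟩)
    exact hd.hasFDerivAt.comp_hasDerivAt (f := fun s => (s, x)) s
      ((hasDerivAt_id s).prodMk (hasDerivAt_const s x))
  have hcont : ContinuousOn (fun p : ℝ × V => fderiv ℝ (Function.uncurry h) p (1, 0))
      (U ×ˢ univ) :=
    (hh.continuousOn_fderiv_of_isOpen hUV le_rfl).clm_apply continuousOn_const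
  have hzero (s : ℝ) (hs : s ∈ U) (x : V) (hx : x ∉ K) :
      fderiv ℝ (Function.uncurry h) (s, x) (1, 0) = 0 := by
    have hev : (fun s => h s x) =ᶠ[𝓝 s] fun _ => 0 :=
      (hU.eventually_mem hs).mono fun r hr => h0 r hr x hx
    exact (hderiv s hs x).unique ((hasDerivAt_const s 0).congr_of_eventuallyEq hev)
  obtain ⟨δ, hδ, hball⟩ := nhds_basis_closedBall.mem_iff.1 (hU.mem_nhds ht)
  obtain ⟨C, hC⟩ := ((isCompact_closedBall t δ).prod hK).exists_bound_of_continuousOn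
    (hcont.mono (prod_mono hball (subset_univ K)))
  simp_rw [fun x => (hderiv t ht x).deriv]
  refine hasDerivAt_integral_of_dominated_loc_of_deriv_le (F := h) (s := closedBall t δ)
    (F' := fun s x => fderiv ℝ (Function.uncurry h) (s, x) (1, 0)) (bound := K.indicator fun _ => C)
    (closedBall_mem_nhds t hδ) ?_ ?_ ?_ ?_ ?_ ?_
  · exact (hU.eventually_mem ht).mono fun s hs =>
      ((hslice s hs).integrable_of_hasCompactSupport (.intro hK (h0 s hs))).1
  · exact (hslice t ht).integrable_of_hasCompactSupport (.intro hK (h0 t ht))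
  · refine (Continuous.integrable_of_hasCompactSupport ?_ (.intro hK (hzero t ht))).1
    exact continuousOn_univ.1 (hcont.comp (f := fun x => (t, x)) (by fun_prop)
      fun x _ => ⟨ht, mem_univ _⟩)
  · refine Eventually.of_forall fun x s hs => ?_
    by_cases hx : x ∈ K
    · simpa [hx] using hC (s, x) ⟨hs, hx⟩
    · simp [hx, hzero s (hball hs) x hx]
  · exact (integrable_indicator_iff hK.measurableSet).2 (integrableOn_const hK.measure_lt_top.ne)
  · exact Eventually.of_forall fun x s hs => hderiv s (hball hs) x

end Integration

theorem abs_sub_sub_integral_le {T : ℝ} (hT : 0 ≤ T) {P P' N m : ℝ → ℝ}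
    (hP : ContinuousOn P (Icc 0 T)) (hN : ContinuousOn N (Icc 0 T)) (hm : ContinuousOn m (Icc 0 T))
    (hP' : ∀ t ∈ Ioo 0 T, HasDerivAt P (P' t) t)
    (hle : ∀ t ∈ Ioo 0 T, |P' t - N t| ≤ m t) :
    |P T - P 0 - ∫ t in (0 : ℝ)..T, N t| ≤ ∫ t in (0 : ℝ)..T, m t := by
  have hd (t : ℝ) (ht : t ∈ Ioo 0 T) :
      HasDerivAt (fun t => P t - ∫ s in (0 : ℝ)..t, N s) (P' t - N t) t :=
    (hP' t ht).sub (intervalIntegral.integral_hasDerivAt_right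
      ((hN.mono (Icc_subset_Icc_right ht.2.le)).intervalIntegrable_of_Icc ht.1.le)
      ((hN.mono Ioo_subset_Icc_self).stronglyMeasurableAtFilter isOpen_Ioo t ht)
      (hN.continuousAt (Icc_mem_nhds ht.1 ht.2)))
  have hprimitive : ContinuousOn (fun t => ∫ s in (0 : ℝ)..t, N s) (Icc 0 T) := by
    rw [← uIcc_of_le hT] at hN ⊢
    exact intervalIntegral.continuousOn_primitive_interval hN.integrableOn_uIcc
  have := norm_sub_le_integral_of_norm_deriv_le_of_le hT
    (f := fun t => P t - ∫ s in (0 : ℝ)..t, N s) (B := m) (hP.sub hprimitive)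
    (fun t ht => (hd t ht).differentiableAt.differentiableWithinAt)
    (Eventually.of_forall fun t ht => by rw [(hd t ht).deriv]; exact hle t ht)
    (hm.intervalIntegrable_of_Icc hT)
  simpa [sub_right_comm] using this

section BackwardCone

variable {X : Type*} [NormedAddCommGroup X]

/-- The backward light cone, truncated at time `0`, with apex `(T, x₀)` and unit speed: the domain
of dependence of the solution at `(T, x₀)`. -/
def backwardCone (T : ℝ) (x₀ : X) : Set (ℝ × X) :=
  {p | p.1 ∈ Icc 0 T ∧ ‖p.2 - x₀‖ ≤ T - p.1}

theorem apex_mem_backwardCone {T : ℝ} (hT : 0 ≤ T) (x₀ : X) : (T, x₀) ∈ backwardCone T x₀ :=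
  ⟨⟨hT, le_rfl⟩, by simp⟩

theorem backwardCone_subset {T S : ℝ} {x₀ y : X} (h : (S, y) ∈ backwardCone T x₀) :
    backwardCone S y ⊆ backwardCone T x₀ := by
  rintro ⟨t, x⟩ ⟨ht, hx⟩
  obtain ⟨hS, hy⟩ := h
  refine ⟨⟨ht.1, ht.2.trans hS.2⟩, ?_⟩
  calc ‖x - x₀‖ ≤ ‖x - y‖ + ‖y - x₀‖ := norm_sub_le_norm_sub_add_norm_sub x y x₀
    _ ≤ T - t := by linarith

theorem isCompact_backwardCone [ProperSpace X] (T : ℝ) (x₀ : X) :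
    IsCompact (backwardCone T x₀) := by
  refine ((isCompact_Icc (a := 0) (b := T)).prod (isCompact_closedBall x₀ T)).of_isClosed_subset
    ((isClosed_Icc.preimage continuous_fst).inter (isClosed_le (f := fun p : ℝ × X => ‖p.2 - x₀‖)
      (g := fun p => T - p.1) (by fun_prop) (by fun_prop))) ?_
  rintro ⟨t, x⟩ ⟨ht, hx⟩
  exact ⟨ht, by simpa [dist_eq_norm] using hx.trans (by linarith [ht.1])⟩

theorem isCompact_setOf_mem_backwardCone_and_norm_le [ProperSpace X] {Y : Type*}
    [NormedAddCommGroup Y] [ProperSpace Y] (T : ℝ) (x₀ : X) (r : ℝ) :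
    IsCompact {p : ℝ × X × Y | (p.1, p.2.1) ∈ backwardCone T x₀ ∧ ‖p.2.2‖ ≤ r} := by
  convert (Homeomorph.prodAssoc ℝ X Y).symm.isCompact_preimage.2
    ((isCompact_backwardCone T x₀).prod (isCompact_closedBall (0 : Y) r)) using 1
  ext ⟨s, y, ζ⟩
  simp [Homeomorph.prodAssoc]

theorem sub_smul_mem_backwardCone [NormedSpace ℝ X] {T t h : ℝ} {x₀ x v : X}
    (hx : (t, x) ∈ backwardCone T x₀) (hv : ‖v‖ ≤ 1) (h0 : 0 ≤ h) (ht : h ≤ t) :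
    (t - h, x - h • v) ∈ backwardCone T x₀ := by
  obtain ⟨htT, hx⟩ := hx
  refine ⟨⟨by linarith, by linarith [htT.2]⟩, ?_⟩
  calc ‖x - h • v - x₀‖ = ‖x - x₀ - h • v‖ := by rw [sub_right_comm]
    _ ≤ ‖x - x₀‖ + h * ‖v‖ := by
      simpa [norm_smul, abs_of_nonneg h0] using norm_sub_le (x - x₀) (h • v)
    _ ≤ T - (t - h) := by nlinarith

/-- The maximum `M` of `Y e^{-2Ct}` over the cone is attained at some `(t, x)`; the hypothesis at
that point, with `m s = M e^{2Cs}`, gives `M ≤ C + M / 2`. -/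
theorem le_exp_of_forall_backwardCone_le [ProperSpace X] {τ C : ℝ} (hC : 0 < C) {Y : ℝ → X → ℝ}
    (hYc : ContinuousOn (Function.uncurry Y) (Ico 0 τ ×ˢ univ)) (hY : ∀ t x, 0 ≤ Y t x)
    (hstep : ∀ T ∈ Ico 0 τ, ∀ x₀, ∀ m : ℝ → ℝ, Continuous m →
      (∀ p ∈ backwardCone T x₀, Y p.1 p.2 ≤ m p.1) → Y T x₀ ≤ C * (1 + ∫ t in (0 : ℝ)..T, m t))
    {T : ℝ} (hT : T ∈ Ico 0 τ) (x₀ : X) : Y T x₀ ≤ 2 * C * exp (2 * C * T) := by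
  have hsub : backwardCone T x₀ ⊆ Ico 0 τ ×ˢ univ := fun p hp =>
    ⟨⟨hp.1.1, hp.1.2.trans_lt hT.2⟩, mem_univ _⟩
  obtain ⟨⟨t, x⟩, hp, hmax⟩ := (isCompact_backwardCone T x₀).exists_isMaxOn
    ⟨_, apex_mem_backwardCone hT.1 x₀⟩
    (f := fun p => Y p.1 p.2 * exp (-(2 * C * p.1))) ((hYc.mono hsub).mul (by fun_prop))
  set M : ℝ := Y t x * exp (-(2 * C * t)) with hM
  have hle : ∀ p ∈ backwardCone T x₀, Y p.1 p.2 ≤ M * exp (2 * C * p.1) := fun p hp => by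
    have : Y p.1 p.2 * exp (-(2 * C * p.1)) ≤ M := hmax hp
    rwa [exp_neg, mul_inv_le_iff₀ (exp_pos _)] at this
  have hint : ∫ s in (0 : ℝ)..t, M * exp (2 * C * s) = M * ((exp (2 * C * t) - 1) / (2 * C)) := by
    rw [intervalIntegral.integral_const_mul,
      intervalIntegral.integral_comp_mul_left _ (by positivity)]
    simp [integral_exp, div_eq_inv_mul]
  have hYt := hstep t (hsub hp).1 x (fun s => M * exp (2 * C * s)) (by fun_prop)
    fun p hq => hle p (backwardCone_subset hp hq)
  have hMnn : 0 ≤ M := mul_nonneg (hY t x) (exp_pos _).le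
  have hM2 : M ≤ 2 * C := by
    have hE : 1 ≤ exp (2 * C * t) := one_le_exp (by nlinarith [hp.1.1])
    have hYM : Y t x = M * exp (2 * C * t) := by rw [hM, mul_assoc, ← exp_add]; simp
    have hcancel : C * (M * ((exp (2 * C * t) - 1) / (2 * C))) = M * (exp (2 * C * t) - 1) / 2 := by
      field_simp
    rw [hint, hYM, mul_add, hcancel] at hYt
    nlinarith
  exact (hle _ (apex_mem_backwardCone hT.1 x₀)).trans (by gcongr)

end BackwardCone

section Transport

variable {X Y : Type*} [NormedAddCommGroup X] [NormedSpace ℝ X]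
  [NormedAddCommGroup Y] [NormedSpace ℝ Y]

theorem exists_neg_smul_mem_posTangentConeAt {T t r : ℝ} {x₀ x v : X} {ξ F : Y}
    (hx : (t, x) ∈ backwardCone T x₀) (ht : 0 < t) (hv : ‖v‖ ≤ 1) (hξ : ‖ξ‖ ≤ r) :
    ∃ h : ℝ, 0 < h ∧ -(h • ((1 : ℝ), v, F)) ∈ posTangentConeAt
      {p : ℝ × X × Y | (p.1, p.2.1) ∈ backwardCone T x₀ ∧ ‖p.2.2‖ ≤ r + 1} (t, x, ξ) := by
  obtain ⟨h, hh, hht, hhF⟩ : ∃ h : ℝ, 0 < h ∧ h ≤ t ∧ h * ‖F‖ ≤ 1 := by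
    refine ⟨min t (‖F‖ + 1)⁻¹, by positivity, min_le_left _ _, ?_⟩
    calc _ ≤ (‖F‖ + 1)⁻¹ * (‖F‖ + 1) := by gcongr; exacts [min_le_right _ _, by simp]
      _ = 1 := inv_mul_cancel₀ (by positivity)
  refine ⟨h, hh, mem_posTangentConeAt_of_segment_subset ?_⟩
  rw [segment_eq_image']
  rintro _ ⟨θ, ⟨hθ0, hθ1⟩, rfl⟩
  have hθh : θ * h ≤ h := mul_le_of_le_one_left hh.le hθ1
  have hpt : (t, x, ξ) + θ • ((t, x, ξ) + -(h • ((1 : ℝ), v, F)) - (t, x, ξ))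
      = (t - θ * h, x - (θ * h) • v, ξ - (θ * h) • F) := by
    simp [smul_smul, sub_eq_add_neg]
  beta_reduce
  rw [hpt]
  refine ⟨sub_smul_mem_backwardCone hx hv (by positivity) (hθh.trans hht), ?_⟩
  calc ‖ξ - (θ * h) • F‖ ≤ ‖ξ‖ + θ * h * ‖F‖ := by
        simpa [norm_smul, abs_of_nonneg hθ0, abs_of_pos hh] using norm_sub_le ξ ((θ * h) • F)
    _ ≤ r + 1 := by gcongr; exact (by gcongr : _ ≤ h * ‖F‖).trans hhF

/-- If `M < f - η t` somewhere, maximise `f - η t` over the backward cone. At the maximum the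
direction `-(1, v, F)` points into the cone, so the derivative along it is nonpositive, whereas the
transport inequality makes it at least `η`. -/
theorem le_of_transport_le_zero [ProperSpace X] [ProperSpace Y] {τ r M : ℝ} (hM : 0 ≤ M)
    {f : ℝ → X → Y → ℝ} {v : ℝ → X → Y → X} {F : ℝ → X → Y → Y} (hv : ∀ t x ξ, ‖v t x ξ‖ ≤ 1)
    (hf : ContDiffOn ℝ 1 (fun p : ℝ × X × Y => f p.1 p.2.1 p.2.2) (Ico 0 τ ×ˢ univ))
    (h0 : ∀ x ξ, f 0 x ξ ≤ M) (hr : ∀ t ∈ Ico 0 τ, ∀ x ξ, r < ‖ξ‖ → f t x ξ = 0)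
    (htransport : ∀ t ∈ Ioo 0 τ, ∀ x ξ, fderiv ℝ (fun p : ℝ × X × Y => f p.1 p.2.1 p.2.2) (t, x, ξ)
      (1, v t x ξ, F t x ξ) ≤ 0)
    {t : ℝ} (ht : t ∈ Ico 0 τ) (x : X) (ξ : Y) : f t x ξ ≤ M := by
  by_contra! hlt
  obtain ⟨η, hη, hηt⟩ : ∃ η : ℝ, 0 < η ∧ M < f t x ξ - η * t := by
    have hc : ContinuousAt (fun η : ℝ => f t x ξ - η * t) 0 := by fun_prop
    obtain ⟨η, hη, h⟩ := ((hc.eventually_const_lt (by simpa using hlt)).filter_mono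
      nhdsWithin_le_nhds |>.and (self_mem_nhdsWithin (s := Ioi (0 : ℝ)))).exists
    exact ⟨η, h, hη⟩
  let K : Set (ℝ × X × Y) := {p | (p.1, p.2.1) ∈ backwardCone t x ∧ ‖p.2.2‖ ≤ r + 1}
  have hKsub : K ⊆ Ico 0 τ ×ˢ univ := fun p hp => ⟨⟨hp.1.1.1, hp.1.1.2.trans_lt ht.2⟩, mem_univ _⟩
  have hmem : (t, x, ξ) ∈ K := by
    refine ⟨apex_mem_backwardCone ht.1 x, not_lt.1 fun hξ => ?_⟩
    linarith [hr t ht x ξ (by simpa using (lt_add_one r).trans hξ)]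
  obtain ⟨⟨s, y, ζ⟩, hp, hmax⟩ :=
    (isCompact_setOf_mem_backwardCone_and_norm_le t x (r + 1)).exists_isMaxOn ⟨_, hmem⟩
    (f := fun p => f p.1 p.2.1 p.2.2 - η * p.1) ((hf.continuousOn.mono hKsub).sub (by fun_prop))
  have hMlt : M < f s y ζ - η * s := hηt.trans_le (hmax hmem)
  have hs : s ∈ Ico 0 τ := (hKsub hp).1
  have hs0 : 0 < s := hs.1.lt_of_ne fun h => by
    subst h; linarith [h0 y ζ]
  have hζ : ‖ζ‖ ≤ r := not_lt.1 fun h => by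
    rw [hr s hs y ζ h] at hMlt; nlinarith
  have hd : HasFDerivAt (fun p : ℝ × X × Y => f p.1 p.2.1 p.2.2 - η * p.1)
      (fderiv ℝ (fun p : ℝ × X × Y => f p.1 p.2.1 p.2.2) (s, y, ζ)
        - η • ContinuousLinearMap.fst ℝ ℝ (X × Y)) (s, y, ζ) :=
    (((hf.differentiableOn one_ne_zero).differentiableAt (prod_mem_nhds
      (Ico_mem_nhds hs0 hs.2) univ_mem)).hasFDerivAt).sub
        (hasFDerivAt_fst.const_mul η)
  obtain ⟨h, hh, hcone⟩ :=
    exists_neg_smul_mem_posTangentConeAt (F := F s y ζ) hp.1 hs0 (hv s y ζ) hζ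
  have hle := hmax.localize.hasFDerivWithinAt_nonpos hd.hasFDerivWithinAt hcone
  have := htransport s ⟨hs0, hs.2⟩ y ζ
  simp only [map_neg, map_smul, sub_apply, smul_apply, ContinuousLinearMap.coe_fst',
    smul_eq_mul] at hle
  nlinarith

end Transport

section VectorCalculus

theorem inner_eq_sum (a b : E3) : ⟪a, b⟫ = a 0 * b 0 + a 1 * b 1 + a 2 * b 2 := by
  simp [PiLp.inner_apply, Fin.sum_univ_three, mul_comm]

theorem norm_e3 (i : Fin 3) : ‖e3 i‖ = 1 := by simp [e3]

theorem inner_e3 (a : E3) (i : Fin 3) : ⟪a, e3 i⟫ = a i := by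
  simp [e3, EuclideanSpace.inner_single_right]

theorem eq_sum_smul_e3 (x : E3) : x = x 0 • e3 0 + x 1 • e3 1 + x 2 • e3 2 := by
  ext i
  fin_cases i <;> simp [e3]

theorem norm_le_sum_abs_inner_e3 (x : E3) : ‖x‖ ≤ ∑ i, |⟪x, e3 i⟫| := by
  conv_lhs => rw [eq_sum_smul_e3 x]
  refine (norm_add₃_le ..).trans ?_
  simp [Fin.sum_univ_three, norm_smul, inner_e3, norm_e3]

theorem cross3_apply_zero (a b : E3) : cross3 a b 0 = a 1 * b 2 - a 2 * b 1 := rfl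

theorem cross3_apply_one (a b : E3) : cross3 a b 1 = a 2 * b 0 - a 0 * b 2 := rfl

theorem cross3_apply_two (a b : E3) : cross3 a b 2 = a 0 * b 1 - a 1 * b 0 := rfl

theorem cross3_zero_left (b : E3) : cross3 0 b = 0 := by
  ext i
  fin_cases i <;> simp [cross3]

theorem cross3_zero_right (a : E3) : cross3 a 0 = 0 := by
  ext i
  fin_cases i <;> simp [cross3]

theorem inner_cross3_left (a b c : E3) : ⟪cross3 a b, c⟫ = ⟪a, cross3 b c⟫ := by
  simp only [inner_eq_sum, cross3_apply_zero, cross3_apply_one, cross3_apply_two]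
  ring

theorem norm_cross3_le (a b : E3) : ‖cross3 a b‖ ≤ ‖a‖ * ‖b‖ := by
  have lagrange : ‖cross3 a b‖ ^ 2 = (‖a‖ * ‖b‖) ^ 2 - ⟪a, b⟫ ^ 2 := by
    simp only [mul_pow, ← real_inner_self_eq_norm_sq, inner_eq_sum, cross3_apply_zero,
      cross3_apply_one, cross3_apply_two]
    ring
  refine abs_le_of_sq_le_sq' ?_ (by positivity) |>.2
  rw [lagrange]
  linarith [sq_nonneg ⟪a, b⟫]

theorem isBoundedBilinearMap_cross3 :
    IsBoundedBilinearMap ℝ (fun p : E3 × E3 => cross3 p.1 p.2) where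
  add_left a b c := by ext i; fin_cases i <;> simp [cross3] <;> ring
  smul_left r a b := by ext i; fin_cases i <;> simp [cross3] <;> ring
  add_right a b c := by ext i; fin_cases i <;> simp [cross3] <;> ring
  smul_right r a b := by ext i; fin_cases i <;> simp [cross3] <;> ring
  bound := ⟨1, one_pos, fun a b => by simpa using norm_cross3_le a b⟩

theorem cross3_neg_right (a b : E3) : cross3 a (-b) = -cross3 a b :=
  map_neg (isBoundedBilinearMap_cross3.toContinuousLinearMap a) b

variable {X : Type*} [NormedAddCommGroup X] [NormedSpace ℝ X]

theorem contDiff_cross3 {n : WithTop ℕ∞} {a b : X → E3} (ha : ContDiff ℝ n a)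
    (hb : ContDiff ℝ n b) : ContDiff ℝ n fun x => cross3 (a x) (b x) :=
  isBoundedBilinearMap_cross3.contDiff.comp (ha.prodMk hb)

theorem hasFDerivAt_cross3 {a b : X → E3} {x : X} (ha : DifferentiableAt ℝ a x)
    (hb : DifferentiableAt ℝ b x) :
    HasFDerivAt (fun y => cross3 (a y) (b y))
      (isBoundedBilinearMap_cross3.deriv (a x, b x) ∘L (fderiv ℝ a x).prod (fderiv ℝ b x)) x :=
  (isBoundedBilinearMap_cross3.hasFDerivAt (a x, b x)).comp (f := fun y => (a y, b y)) x
    (ha.hasFDerivAt.prodMk hb.hasFDerivAt)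

theorem fderiv_cross3 {a b : X → E3} {x : X} (ha : DifferentiableAt ℝ a x)
    (hb : DifferentiableAt ℝ b x) (v : X) :
    fderiv ℝ (fun y => cross3 (a y) (b y)) x v
      = cross3 (a x) (fderiv ℝ b x v) + cross3 (fderiv ℝ a x v) (b x) := by
  rw [(hasFDerivAt_cross3 ha hb).fderiv]
  rfl

theorem pd3_apply {a : E3 → E3} {x : E3} (ha : DifferentiableAt ℝ a x) (i j : Fin 3) :
    pd3 (fun y => a y j) i x = fderiv ℝ a x (e3 i) j :=
  congr($(((EuclideanSpace.proj (𝕜 := ℝ) j).hasFDerivAt.comp x ha.hasFDerivAt).fderiv) (e3 i))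

theorem curl3_eq_sum {a : E3 → E3} {x : E3} (ha : DifferentiableAt ℝ a x) :
    curl3 a x = ∑ i, cross3 (e3 i) (fderiv ℝ a x (e3 i)) := by
  ext i
  fin_cases i <;> simp [curl3, pd3_apply ha, cross3, Fin.sum_univ_three, e3] <;> ring

theorem divg_eq_fderiv {a : E3 → E3} {x : E3} (ha : DifferentiableAt ℝ a x) :
    divg a x = ∑ i, fderiv ℝ a x (e3 i) i :=
  Finset.sum_congr rfl fun i _ => pd3_apply ha i i

theorem divg_smul {ψ : E3 → ℝ} {a : E3 → E3} {x : E3} (hψ : DifferentiableAt ℝ ψ x)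
    (ha : DifferentiableAt ℝ a x) :
    divg (fun y => ψ y • a y) x = ψ x * divg a x + fderiv ℝ ψ x (a x) := by
  rw [divg_eq_fderiv (hψ.fun_smul ha), divg_eq_fderiv ha]
  conv_rhs => rw [eq_sum_smul_e3 (a x)]
  rw [fderiv_fun_smul hψ ha]
  simp [Fin.sum_univ_three]
  ring

theorem divg_cross3 {a b : E3 → E3} {x : E3} (ha : DifferentiableAt ℝ a x)
    (hb : DifferentiableAt ℝ b x) :
    divg (fun y => cross3 (a y) (b y)) x = ⟪curl3 a x, b x⟫ - ⟪a x, curl3 b x⟫ := by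
  rw [divg_eq_fderiv (hasFDerivAt_cross3 ha hb).differentiableAt, curl3_eq_sum ha, curl3_eq_sum hb]
  simp_rw [fderiv_cross3 ha hb]
  simp [Fin.sum_univ_three, inner_eq_sum, cross3, e3]
  ring

theorem divg_add {a b : E3 → E3} {x : E3} (ha : DifferentiableAt ℝ a x)
    (hb : DifferentiableAt ℝ b x) : divg (fun y => a y + b y) x = divg a x + divg b x := by
  rw [divg_eq_fderiv (ha.fun_add hb), divg_eq_fderiv ha, divg_eq_fderiv hb, fderiv_fun_add ha hb,
    ← Finset.sum_add_distrib]
  simp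

theorem curl3_smul_const {ψ : E3 → ℝ} {x : E3} (hψ : DifferentiableAt ℝ ψ x) (e : E3) :
    curl3 (fun y => ψ y • e) x = cross3 (gradient ψ x) e := by
  have hfderiv : fderiv ℝ (fun y => ψ y • e) x = (fderiv ℝ ψ x).smulRight e :=
    (hψ.hasFDerivAt.smul_const e).fderiv
  rw [curl3_eq_sum (hψ.smul_const e), eq_sum_smul_e3 (gradient ψ x), hfderiv]
  simp_rw [← inner_e3, inner_gradient_left]
  ext i
  fin_cases i <;> simp [cross3, Fin.sum_univ_three, e3] <;> ring

theorem divg_cross3_smul_const {ψ : E3 → ℝ} {a : E3 → E3} {x : E3} (hψ : DifferentiableAt ℝ ψ x)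
    (ha : DifferentiableAt ℝ a x) (e : E3) :
    divg (fun y => cross3 (a y) (ψ y • e)) x
      = ψ x * ⟪curl3 a x, e⟫ - ⟪a x, cross3 (gradient ψ x) e⟫ := by
  rw [divg_cross3 ha (hψ.smul_const e), curl3_smul_const hψ, real_inner_smul_right]

theorem curl3_cross3_const {a : E3 → E3} {x : E3} (ha : DifferentiableAt ℝ a x) (e : E3) :
    curl3 (fun y => cross3 (a y) e) x = fderiv ℝ a x e - divg a x • e := by
  have he : DifferentiableAt ℝ (fun _ : E3 => e) x := differentiableAt_const e
  conv_rhs => rw [eq_sum_smul_e3 e]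
  rw [curl3_eq_sum (hasFDerivAt_cross3 ha he).differentiableAt, divg_eq_fderiv ha]
  simp_rw [fderiv_cross3 ha he, fderiv_fun_const]
  ext i
  fin_cases i <;> simp [cross3, Fin.sum_univ_three, e3] <;> ring

theorem contDiff_gradient {n : WithTop ℕ∞} {φ : E3 → ℝ} (hφ : ContDiff ℝ (n + 1) φ) :
    ContDiff ℝ n (gradient φ) := by
  refine contDiff_euclidean.2 fun i => ?_
  simp_rw [← inner_e3, inner_gradient_left]
  exact (hφ.fderiv_right le_rfl).clm_apply contDiff_const

theorem tsupport_gradient_subset (φ : E3 → ℝ) : tsupport (gradient φ) ⊆ tsupport φ :=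
  (closure_mono fun x (hx : gradient φ x ≠ 0) (hx' : fderiv ℝ φ x = 0) =>
    hx (by simp [gradient, hx'])).trans (tsupport_fderiv_subset ℝ)

theorem inner_fderiv_gradient_comm {φ : E3 → ℝ} (hφ : ContDiff ℝ 2 φ) (x v w : E3) :
    ⟪fderiv ℝ (gradient φ) x v, w⟫ = ⟪fderiv ℝ (gradient φ) x w, v⟫ := by
  have hg : DifferentiableAt ℝ (gradient φ) x :=
    (contDiff_gradient hφ).differentiable one_ne_zero x
  have hd : DifferentiableAt ℝ (fderiv ℝ φ) x :=
    (hφ.fderiv_right le_rfl).differentiable one_ne_zero x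
  have key (v w : E3) : ⟪fderiv ℝ (gradient φ) x v, w⟫ = fderiv ℝ (fderiv ℝ φ) x v w := by
    have h1 := fderiv_inner_apply ℝ hg (differentiableAt_const w) v
    simp only [inner_gradient_left] at h1
    rw [fderiv_clm_apply hd (differentiableAt_const w)] at h1
    simpa using h1.symm
  rw [key, key]
  exact hφ.contDiffAt.isSymmSndFDerivAt (by simp) v w

theorem divg_smul_gradient_sub {φ w : E3 → ℝ} (hφ : ContDiff ℝ 2 φ) (hw : ContDiff ℝ 2 w) (x : E3) :
    divg (fun y => φ y • gradient w y - w y • gradient φ y) x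
      = φ x * divg (gradient w) x - divg (gradient φ) x * w x := by
  have hφ1 := hφ.differentiable two_ne_zero x
  have hw1 := hw.differentiable two_ne_zero x
  have hgφ := (contDiff_gradient hφ).differentiable one_ne_zero x
  have hgw := (contDiff_gradient hw).differentiable one_ne_zero x
  simp_rw [sub_eq_add_neg, ← neg_smul]
  rw [divg_add (hφ1.fun_smul hgw) (hw1.fun_neg.fun_smul hgφ), divg_smul hφ1 hgw,
    divg_smul hw1.fun_neg hgφ, fderiv_fun_neg, neg_apply, ← inner_gradient_left,
    ← inner_gradient_left, real_inner_comm]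
  ring

theorem divg_cross3_cross3_gradient_add {φ : E3 → ℝ} {a : E3 → E3} {x : E3} (hφ : ContDiff ℝ 2 φ)
    (ha : DifferentiableAt ℝ a x) (e : E3) :
    divg (fun y => cross3 (a y) (cross3 (gradient φ y) e) + ⟪gradient φ y, e⟫ • a y) x
      = ⟪curl3 a x, cross3 (gradient φ x) e⟫ + divg (gradient φ) x * ⟪a x, e⟫
        + ⟪gradient φ x, e⟫ * divg a x := by
  have hg : DifferentiableAt ℝ (gradient φ) x :=
    (contDiff_gradient hφ).differentiable one_ne_zero x
  have he : DifferentiableAt ℝ (fun _ : E3 => e) x := differentiableAt_const e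
  have hge := (hasFDerivAt_cross3 hg he).differentiableAt
  rw [divg_add (hasFDerivAt_cross3 ha hge).differentiableAt ((hg.inner ℝ he).fun_smul ha),
    divg_cross3 ha hge, divg_smul (hg.inner ℝ he) ha, curl3_cross3_const hg,
    fderiv_inner_apply ℝ hg he, inner_sub_right, real_inner_smul_right,
    real_inner_comm _ (a x), inner_fderiv_gradient_comm hφ]
  simp
  ring

theorem curl3_gradient {φ : E3 → ℝ} (hφ : ContDiff ℝ 2 φ) (x : E3) :
    curl3 (gradient φ) x = 0 := by
  have hsymm (i j : Fin 3) : fderiv ℝ (gradient φ) x (e3 i) j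
      = fderiv ℝ (gradient φ) x (e3 j) i := by
    simpa only [inner_e3] using inner_fderiv_gradient_comm hφ x (e3 i) (e3 j)
  have hg : DifferentiableAt ℝ (gradient φ) x :=
    (contDiff_gradient hφ).differentiable one_ne_zero x
  ext i
  fin_cases i <;> simp [curl3, pd3_apply hg, hsymm 0 1, hsymm 0 2, hsymm 1 2]

theorem integral_divg_eq_zero {a : E3 → E3} (ha : ContDiff ℝ 1 a) (hc : HasCompactSupport a) :
    ∫ x, divg a x = 0 := by
  have hcomp (i : Fin 3) : ContDiff ℝ 1 fun y => a y i := contDiff_euclidean.1 ha i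
  have hcs (i : Fin 3) : HasCompactSupport fun y => a y i :=
    hc.comp_left (g := fun z : E3 => z i) rfl
  unfold divg pd3
  rw [integral_finsetSum _ fun i _ => ?_]
  · exact Finset.sum_eq_zero fun i _ => integral_fderiv_apply_eq_zero volume (hcomp i) (hcs i) _
  · exact (((hcomp i).continuous_fderiv one_ne_zero).clm_apply
      continuous_const).integrable_of_hasCompactSupport ((hcs i).fderiv_apply (𝕜 := ℝ) _)

theorem continuous_divg {a : E3 → E3} (ha : ContDiff ℝ 1 a) : Continuous (divg a) :=
  continuous_finsetSum _ fun i _ =>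
    ((contDiff_euclidean.1 ha i).continuous_fderiv one_ne_zero).clm_apply continuous_const

theorem hasCompactSupport_divg {a : E3 → E3} (ha : ContDiff ℝ 1 a) (hc : HasCompactSupport a) :
    HasCompactSupport (divg a) :=
  (hc.fderiv (𝕜 := ℝ)).mono fun x hx hx' =>
    hx (by simp [divg_eq_fderiv (ha.differentiable one_ne_zero x), hx'])

theorem continuous_curl3 {a : E3 → E3} (ha : ContDiff ℝ 1 a) : Continuous (curl3 a) := by
  have hfderiv (i : Fin 3) : Continuous fun x => fderiv ℝ a x (e3 i) :=
    (ha.continuous_fderiv one_ne_zero).clm_apply continuous_const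
  rw [show curl3 a = fun x => ∑ i, cross3 (e3 i) (fderiv ℝ a x (e3 i)) from
    funext fun x => curl3_eq_sum (ha.differentiable one_ne_zero x)]
  exact continuous_finsetSum _ fun i _ =>
    isBoundedBilinearMap_cross3.continuous.comp (continuous_const.prodMk (hfderiv i))

theorem integrable_divg {a : E3 → E3} (ha : ContDiff ℝ 1 a) (hc : HasCompactSupport a) :
    Integrable (divg a) :=
  (continuous_divg ha).integrable_of_hasCompactSupport (hasCompactSupport_divg ha hc)

theorem integral_fderiv_apply_eq_zero_of_divg_eq_zero {h : E3 → ℝ} {a : E3 → E3}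
    (hh : ContDiff ℝ 1 h) (hc : HasCompactSupport h) (ha : ContDiff ℝ 1 a)
    (hdiv : ∀ x, divg a x = 0) : ∫ x, fderiv ℝ h x (a x) = 0 := by
  simpa [divg_smul (hh.differentiable one_ne_zero _) (ha.differentiable one_ne_zero _), hdiv]
    using integral_divg_eq_zero (a := fun x => h x • a x) (hh.smul ha) hc.smul_right

theorem integral_mul_inner_curl3 {ψ : E3 → ℝ} {a : E3 → E3} (hψ : ContDiff ℝ 1 ψ)
    (hc : HasCompactSupport ψ) (ha : ContDiff ℝ 1 a) (e : E3) :
    ∫ x, ψ x * ⟪curl3 a x, e⟫ = ∫ x, ⟪a x, cross3 (gradient ψ x) e⟫ := by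
  have hZ : ContDiff ℝ 1 fun x => cross3 (a x) (ψ x • e) :=
    contDiff_cross3 ha (hψ.smul contDiff_const)
  have hZc : HasCompactSupport fun x => cross3 (a x) (ψ x • e) :=
    hc.mono fun x hx hx' => hx (by simp only [hx', zero_smul, cross3_zero_right])
  have hint := integrable_divg hZ hZc
  have hzero := integral_divg_eq_zero hZ hZc
  have hdivg (x : E3) := divg_cross3_smul_const (hψ.differentiable one_ne_zero x)
    (ha.differentiable one_ne_zero x) e
  have hcurl : Integrable fun x => ψ x * ⟪curl3 a x, e⟫ :=
    (hψ.continuous.mul ((continuous_curl3 ha).inner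
      continuous_const)).integrable_of_hasCompactSupport hc.mul_right
  rw [← sub_eq_zero, ← integral_sub hcurl, ← hzero]
  · simp_rw [hdivg]
  · exact (hcurl.sub hint).congr (.of_forall fun x => by simp [hdivg])

end VectorCalculus

section LorentzForce

theorem sqrt_one_add_norm_sq_pos (ξ : E3) : 0 < √(1 + ‖ξ‖ ^ 2) := by positivity

theorem contDiff_sqrt_one_add_norm_sq {n : WithTop ℕ∞} :
    ContDiff ℝ n fun ξ : E3 => √(1 + ‖ξ‖ ^ 2) :=
  (contDiff_const.add (contDiff_norm_sq ℝ)).sqrt fun ξ => by positivity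

theorem contDiff_vrel {n : WithTop ℕ∞} : ContDiff ℝ n vrel :=
  (contDiff_sqrt_one_add_norm_sq.inv fun ξ => (sqrt_one_add_norm_sq_pos ξ).ne').smul contDiff_id

theorem norm_vrel_lt_one (ξ : E3) : ‖vrel ξ‖ < 1 := by
  have hpos := sqrt_one_add_norm_sq_pos ξ
  rw [vrel, norm_smul, norm_inv, Real.norm_of_nonneg hpos.le, inv_mul_lt_iff₀ hpos, mul_one]
  exact Real.lt_sqrt_of_sq_lt (by linarith)

theorem gradient_sqrt_one_add_norm_sq :
    gradient (fun ξ : E3 => √(1 + ‖ξ‖ ^ 2)) = vrel := by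
  funext ξ
  refine ext_inner_right ℝ fun η => ?_
  have h := ((hasStrictFDerivAt_norm_sq ξ).hasFDerivAt.const_add 1).sqrt (by positivity)
  rw [inner_gradient_left, h.fderiv, vrel, real_inner_smul_left]
  simp
  field_simp

/-- The Lorentz force `E + v(ξ) × B` at momentum `ξ`. -/
def lorentzForce (E B ξ : E3) : E3 := E + cross3 (vrel ξ) B

theorem contDiff_lorentzForce {n : WithTop ℕ∞} (E B : E3) : ContDiff ℝ n (lorentzForce E B) :=
  contDiff_const.add (contDiff_cross3 contDiff_vrel contDiff_const)

theorem norm_lorentzForce_le (E B ξ : E3) : ‖lorentzForce E B ξ‖ ≤ ‖E‖ + ‖B‖ :=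
  (norm_add_le _ _).trans <| by
    gcongr
    exact (norm_cross3_le _ _).trans
      (mul_le_of_le_one_left (norm_nonneg B) (norm_vrel_lt_one ξ).le)

-- `v` is a gradient field, hence curl-free.
theorem divg_lorentzForce (E B ξ : E3) : divg (lorentzForce E B) ξ = 0 := by
  have hv : Differentiable ℝ vrel := (contDiff_vrel (n := 1)).differentiable one_ne_zero
  have hcross := hasFDerivAt_cross3 (hv ξ) (differentiableAt_const B)
  have hconst : divg (lorentzForce E B) ξ = divg (fun η => cross3 (vrel η) B) ξ := by
    change divg (fun η => E + cross3 (vrel η) B) ξ = _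
    rw [divg_eq_fderiv hcross.differentiableAt,
      divg_eq_fderiv (hcross.differentiableAt.const_add E)]
    simp_rw [fderiv_const_add]
  have hcurlv : curl3 vrel ξ = 0 := by
    rw [← gradient_sqrt_one_add_norm_sq, curl3_gradient contDiff_sqrt_one_add_norm_sq]
  rw [hconst, divg_cross3 (hv ξ) (differentiableAt_const B), hcurlv,
    curl3_eq_sum (differentiableAt_const B)]
  simp [cross3_zero_right]

end LorentzForce

section TimeDependentGradient

variable {φ ψ : ℝ → E3 → ℝ}

theorem contDiff_uncurry_gradient {n : WithTop ℕ∞} (hφ : ContDiff ℝ (n + 1) (Function.uncurry φ)) :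
    ContDiff ℝ n fun p : ℝ × E3 => gradient (φ p.1) p.2 :=
  (InnerProductSpace.toDual ℝ E3).symm.contDiff.comp
    (ContDiff.fderiv (f := fun p : ℝ × E3 => φ p.1)
      (hφ.comp (contDiff_fst.fst.prodMk contDiff_snd)) contDiff_snd le_rfl)

theorem contDiff_slice {n : WithTop ℕ∞} (hφ : ContDiff ℝ n (Function.uncurry φ)) (t : ℝ) :
    ContDiff ℝ n (φ t) :=
  hφ.comp (contDiff_const.prodMk contDiff_id)

theorem hasDerivAt_gradient (hφ : ContDiff ℝ 2 (Function.uncurry φ))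
    (hφψ : ∀ t x, HasDerivAt (fun s => φ s x) (ψ t x) t) (t : ℝ) (x : E3) :
    HasDerivAt (fun s => gradient (φ s) x) (gradient (ψ t) x) t := by
  have hd (p : ℝ × E3) : HasFDerivAt (Function.uncurry φ) (fderiv ℝ (Function.uncurry φ) p) p :=
    (hφ.differentiable two_ne_zero p).hasFDerivAt
  have hd2 : HasFDerivAt (fderiv ℝ (Function.uncurry φ))
      (fderiv ℝ (fderiv ℝ (Function.uncurry φ)) (t, x)) (t, x) :=
    ((hφ.fderiv_right (m := 1) le_rfl).differentiable one_ne_zero _).hasFDerivAt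
  have hx (s : ℝ) (y : E3) : HasFDerivAt (φ s)
      ((fderiv ℝ (Function.uncurry φ) (s, y)).comp (.inr ℝ ℝ E3)) y :=
    (hd (s, y)).comp y (hasFDerivAt_prodMk_right s y)
  have ht (s : ℝ) (y : E3) : ψ s y = fderiv ℝ (Function.uncurry φ) (s, y) (1, 0) :=
    (hφψ s y).unique ((hd (s, y)).comp_hasDerivAt (f := fun s => (s, y)) s
      ((hasDerivAt_id s).prodMk (hasDerivAt_const s y)))
  have hψ : fderiv ℝ (ψ t) x
      = (fderiv ℝ (fderiv ℝ (Function.uncurry φ)) (t, x) (1, 0)).comp (.inr ℝ ℝ E3) := by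
    rw [show ψ t = fun y => fderiv ℝ (Function.uncurry φ) (t, y) (1, 0) from funext (ht t),
      (((hd2.comp x (hasFDerivAt_prodMk_right t x)).clm_apply
        (hasFDerivAt_const ((1 : ℝ), (0 : E3)) x)).congr_of_eventuallyEq (by rfl)).fderiv]
    ext w
    simpa using hφ.contDiffAt.isSymmSndFDerivAt (by simp) (0, w) (1, 0)
  have hfderiv : HasDerivAt (fun s => fderiv ℝ (φ s) x) (fderiv ℝ (ψ t) x) t := by
    simp_rw [hψ, fun s => (hx s x).fderiv]
    simpa using (hd2.comp_hasDerivAt (f := fun s => (s, x)) t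
      ((hasDerivAt_id t).prodMk (hasDerivAt_const t x))).clm_comp
        (hasDerivAt_const t (ContinuousLinearMap.inr ℝ ℝ E3))
  exact (InnerProductSpace.toDual ℝ E3).symm.toContinuousLinearEquiv.hasFDerivAt.comp_hasDerivAt t
    hfderiv

end TimeDependentGradient

section KineticDuality

theorem hasCompactSupport_prodMk_left {h : E3 × E3 → ℝ} (hc : HasCompactSupport h) (ξ : E3) :
    HasCompactSupport fun x => h (x, ξ) :=
  .intro (hc.image continuous_fst) fun _ hx =>
    image_eq_zero_of_notMem_tsupport fun hmem => hx ⟨_, hmem, rfl⟩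

theorem hasCompactSupport_prodMk_right {h : E3 × E3 → ℝ} (hc : HasCompactSupport h) (x : E3) :
    HasCompactSupport fun ξ => h (x, ξ) :=
  .intro (hc.image continuous_snd) fun _ hξ =>
    image_eq_zero_of_notMem_tsupport fun hmem => hξ ⟨_, hmem, rfl⟩

theorem integral_fderiv_velocity_force_eq_zero {h : E3 × E3 → ℝ} {v : E3 → E3}
    {F : E3 → E3 → E3}
    (hh : ContDiff ℝ 1 h) (hc : HasCompactSupport h) (hv : Continuous v)
    (hF : Continuous fun p : E3 × E3 => F p.1 p.2) (hF1 : ∀ x, ContDiff ℝ 1 (F x))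
    (hdiv : ∀ x ξ, divg (F x) ξ = 0) : ∫ p, fderiv ℝ h p (v p.2, F p.1 p.2) = 0 := by
  have hint {w : E3 × E3 → E3 × E3} (hw : Continuous w) : Integrable fun p => fderiv ℝ h p (w p) :=
    ((hh.continuous_fderiv one_ne_zero).clm_apply hw).integrable_of_hasCompactSupport
      ((hc.fderiv (𝕜 := ℝ)).mono fun p hp hp' => hp (by simp only [hp', zero_apply]))
  have hsplit (p : E3 × E3) : fderiv ℝ h p (v p.2, F p.1 p.2)
      = fderiv ℝ h p (v p.2, 0) + fderiv ℝ h p (0, F p.1 p.2) := by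
    rw [← map_add]
    simp
  have hd (p : E3 × E3) : HasFDerivAt h (fderiv ℝ h p) p :=
    (hh.differentiable one_ne_zero p).hasFDerivAt
  have hspace : ∫ p, fderiv ℝ h p (v p.2, 0) = 0 := by
    rw [Measure.volume_eq_prod, integral_prod_symm _ (hint (by fun_prop))]
    refine integral_eq_zero_of_ae (.of_forall fun ξ => ?_)
    change _ = (0 : ℝ)
    have := integral_fderiv_apply_eq_zero volume (h := fun x => h (x, ξ)) (by fun_prop)
      (hasCompactSupport_prodMk_left hc ξ) (v ξ)
    rw [← this]
    congr! with x
    rw [HasFDerivAt.fderiv (f := fun x => h (x, ξ))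
      ((hd (x, ξ)).comp (f := fun x => (x, ξ)) x (hasFDerivAt_prodMk_left x ξ))]
    rfl
  have hmomentum : ∫ p, fderiv ℝ h p (0, F p.1 p.2) = 0 := by
    rw [Measure.volume_eq_prod, integral_prod _ (hint (continuous_const.prodMk hF))]
    refine integral_eq_zero_of_ae (.of_forall fun x => ?_)
    change _ = (0 : ℝ)
    have := integral_fderiv_apply_eq_zero_of_divg_eq_zero (h := fun ξ => h (x, ξ)) (by fun_prop)
      (hasCompactSupport_prodMk_right hc x) (hF1 x) (hdiv x)
    rw [← this]
    congr! with ξ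
    rw [HasFDerivAt.fderiv (f := fun ξ => h (x, ξ))
      ((hd (x, ξ)).comp (f := fun ξ => (x, ξ)) ξ (hasFDerivAt_prodMk_right x ξ))]
    rfl
  simp_rw [hsplit]
  rw [integral_add (hint (by fun_prop)) (hint (continuous_const.prodMk hF)), hspace, hmomentum,
    add_zero]

/-- A phase-space density `u` on `[0, τ)` with momenta bounded by `r`, transported along
`ẋ = v(ξ)`, `ξ̇ = F(t, x, ξ)` where `F` is divergence-free in `ξ`. The force is kept abstract
because the duality `(E, B) ↦ (B, -E)` is applied to the fields but not to the force. -/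
structure IsTransported (τ r : ℝ) (F : ℝ → E3 → E3 → E3) (u : ℝ → E3 → E3 → ℝ) : Prop where
  contDiffOn : ContDiffOn ℝ 1 (fun p : ℝ × E3 × E3 => u p.1 p.2.1 p.2.2) (Ico 0 τ ×ˢ univ)
  eq_zero_of_lt_norm : ∀ t ∈ Ico 0 τ, ∀ x ξ, r < ‖ξ‖ → u t x ξ = 0
  continuous_force : ∀ t ∈ Ioo 0 τ, Continuous (Function.uncurry (F t))
  contDiff_force : ∀ t x, ContDiff ℝ 1 (F t x)
  divg_force : ∀ t x ξ, divg (F t x) ξ = 0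
  transport : ∀ t ∈ Ioo 0 τ, ∀ x ξ, fderiv ℝ (fun p : ℝ × E3 × E3 => u p.1 p.2.1 p.2.2) (t, x, ξ)
    (1, vrel ξ, F t x ξ) = 0

variable {τ r : ℝ} {F : ℝ → E3 → E3 → E3} {u : ℝ → E3 → E3 → ℝ}

theorem IsTransported.mul_fderiv_eq (hu : IsTransported τ r F u) {W : ℝ × E3 × E3 → ℝ} {t : ℝ}
    {p : E3 × E3} (hW : DifferentiableAt ℝ W (t, p)) (ht : t ∈ Ioo 0 τ) :
    u t p.1 p.2 * fderiv ℝ W (t, p) (1, vrel p.2, F t p.1 p.2)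
      = deriv (fun s => u s p.1 p.2 * W (s, p)) t
        + fderiv ℝ (fun p : E3 × E3 => u t p.1 p.2 * W (t, p)) p (vrel p.2, F t p.1 p.2) := by
  have hud : DifferentiableAt ℝ (fun p : ℝ × E3 × E3 => u p.1 p.2.1 p.2.2) (t, p) :=
    (hu.contDiffOn.differentiableOn one_ne_zero).differentiableAt
      (prod_mem_nhds (Ico_mem_nhds ht.1 ht.2) univ_mem)
  have hmul := hud.hasFDerivAt.fun_mul hW.hasFDerivAt
  rw [HasDerivAt.deriv (f := fun s => u s p.1 p.2 * W (s, p))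
      (hmul.comp_hasDerivAt (f := fun s => (s, p)) t
        ((hasDerivAt_id t).prodMk (hasDerivAt_const t p))),
    HasFDerivAt.fderiv (f := fun p : E3 × E3 => u t p.1 p.2 * W (t, p))
      (hmul.comp p (hasFDerivAt_prodMk_right t p))]
  simp only [add_apply, smul_apply, smul_eq_mul, ContinuousLinearMap.comp_apply,
    ContinuousLinearMap.inr_apply]
  have hsplit (L : ℝ × E3 × E3 →L[ℝ] ℝ) :
      L (1, vrel p.2, F t p.1 p.2) = L (1, 0) + L (0, vrel p.2, F t p.1 p.2) := by
    rw [← map_add]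
    simp
  have htransport := hu.transport t ht p.1 p.2
  rw [hsplit] at htransport ⊢
  linear_combination -W (t, p) * htransport

theorem IsTransported.hasDerivAt_integral_mul (hu : IsTransported τ r F u) {W : ℝ × E3 × E3 → ℝ}
    (hW : ContDiff ℝ 1 W) {K : Set E3} (hK : IsCompact K)
    (hWK : ∀ t ∈ Ioo 0 τ, ∀ x, x ∉ K → ∀ ξ, W (t, x, ξ) = 0) {t : ℝ} (ht : t ∈ Ioo 0 τ) :
    HasDerivAt (fun s => ∫ p : E3 × E3, u s p.1 p.2 * W (s, p))
      (∫ p : E3 × E3, u t p.1 p.2 * fderiv ℝ W (t, p) (1, vrel p.2, F t p.1 p.2)) t := by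
  have hcont : ContDiffOn ℝ 1 (fun p : ℝ × E3 × E3 => u p.1 p.2.1 p.2.2 * W p)
      (Ioo 0 τ ×ˢ univ) :=
    (hu.contDiffOn.mono (prod_mono Ioo_subset_Ico_self subset_rfl)).mul hW.contDiffOn
  have hzero : ∀ s ∈ Ioo 0 τ, ∀ p : E3 × E3, p ∉ K ×ˢ closedBall 0 r →
      u s p.1 p.2 * W (s, p) = 0 := fun s hs p hp => by
    by_cases hx : p.1 ∈ K
    · rw [hu.eq_zero_of_lt_norm s (Ioo_subset_Ico_self hs) _ _ (by simpa [hx] using hp), zero_mul]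
    · rw [hWK s hs p.1 hx p.2, mul_zero]
  have hKr := hK.prod (isCompact_closedBall (0 : E3) r)
  obtain ⟨hint, hderiv⟩ := hasDerivAt_integral_of_contDiffOn volume
    (h := fun s p => u s p.1 p.2 * W (s, p)) isOpen_Ioo hKr hcont hzero ht
  convert hderiv using 1
  have hslice : ContDiff ℝ 1 fun p : E3 × E3 => u t p.1 p.2 * W (t, p) :=
    contDiffOn_univ.1 (hcont.comp (f := fun p => (t, p)) (by fun_prop) fun p _ => ⟨ht, mem_univ p⟩)
  have hsc : HasCompactSupport fun p : E3 × E3 => u t p.1 p.2 * W (t, p) := .intro hKr (hzero t ht)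
  have hF : Continuous fun p : E3 × E3 => (vrel p.2, F t p.1 p.2) :=
    ((contDiff_vrel (n := 0)).continuous.comp continuous_snd).prodMk (hu.continuous_force t ht)
  have hfree := integral_fderiv_velocity_force_eq_zero hslice hsc
    (contDiff_vrel (n := 0)).continuous (hu.continuous_force t ht) (hu.contDiff_force t)
    (hu.divg_force t)
  simp_rw [fun p : E3 × E3 => hu.mul_fderiv_eq (hW.differentiable one_ne_zero (t, p)) ht]
  rw [integral_add hint, hfree, add_zero]
  exact ((hslice.continuous_fderiv one_ne_zero).clm_apply hF).integrable_of_hasCompactSupport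
    ((hsc.fderiv (𝕜 := ℝ)).mono fun p hp hp' => hp (by simp only [hp', zero_apply]))

end KineticDuality

section MaxwellDuality

/-- A solution of Maxwell's equations on `(0, τ) × ℝ³` with electric charge `ρ`, electric current
`j` and magnetic current `m`. The magnetic current makes the class stable under the duality
`(E, B) ↦ (B, -E)`, so that an estimate of `E` is also an estimate of `B`. -/
structure IsMaxwellSolution (τ : ℝ) (E B j m : ℝ → E3 → E3) (ρ : ℝ → E3 → ℝ) : Prop where
  contDiffOn_electric : ContDiffOn ℝ 1 (Function.uncurry E) (Ico 0 τ ×ˢ univ)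
  contDiffOn_magnetic : ContDiffOn ℝ 1 (Function.uncurry B) (Ico 0 τ ×ˢ univ)
  hasDerivAt_electric : ∀ t ∈ Ioo 0 τ, ∀ x, HasDerivAt (fun s => E s x) (curl3 (B t) x - j t x) t
  hasDerivAt_magnetic : ∀ t ∈ Ioo 0 τ, ∀ x, HasDerivAt (fun s => B s x) (-curl3 (E t) x - m t x) t
  divg_electric : ∀ t ∈ Ioo 0 τ, ∀ x, divg (E t) x = ρ t x

variable {τ : ℝ} {E B j m : ℝ → E3 → E3} {ρ : ℝ → E3 → ℝ}

theorem IsMaxwellSolution.contDiff_electric (hE : IsMaxwellSolution τ E B j m ρ) {t : ℝ}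
    (ht : t ∈ Ico 0 τ) : ContDiff ℝ 1 (E t) :=
  contDiffOn_univ.1 (hE.contDiffOn_electric.comp (f := fun x => (t, x)) (by fun_prop)
    fun x _ => ⟨ht, mem_univ x⟩)

theorem IsMaxwellSolution.contDiff_magnetic (hE : IsMaxwellSolution τ E B j m ρ) {t : ℝ}
    (ht : t ∈ Ico 0 τ) : ContDiff ℝ 1 (B t) :=
  contDiffOn_univ.1 (hE.contDiffOn_magnetic.comp (f := fun x => (t, x)) (by fun_prop)
    fun x _ => ⟨ht, mem_univ x⟩)

/-- The vector field whose divergence is the error made in moving all derivatives of Maxwell's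
equations onto the test functions `φ` and `ψ = ∂ₜφ`, with `w` the initial field component. -/
def dualityField (a b : E3 → E3) (w φ ψ : E3 → ℝ) (e y : E3) : E3 :=
  cross3 (b y) (ψ y • e) + (cross3 (a y) (cross3 (gradient φ y) e) + ⟪gradient φ y, e⟫ • a y)
    + (φ y • gradient w y - w y • gradient φ y)

section DualityField

variable {a b : E3 → E3} {w φ ψ : E3 → ℝ}

theorem contDiff_dualityField (ha : ContDiff ℝ 1 a) (hb : ContDiff ℝ 1 b) (hw : ContDiff ℝ 2 w)
    (hφ : ContDiff ℝ 2 φ) (hψ : ContDiff ℝ 1 ψ) (e : E3) :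
    ContDiff ℝ 1 (dualityField a b w φ ψ e) := by
  have hgφ : ContDiff ℝ 1 (gradient φ) := contDiff_gradient hφ
  exact ((contDiff_cross3 hb (hψ.smul contDiff_const)).add
    ((contDiff_cross3 ha (contDiff_cross3 hgφ contDiff_const)).add
      ((hgφ.inner ℝ contDiff_const).smul ha))).add
    (((hφ.of_le one_le_two).smul (contDiff_gradient hw)).sub ((hw.of_le one_le_two).smul hgφ))

theorem hasCompactSupport_dualityField (a b : E3 → E3) (w : E3 → ℝ) (hφ : HasCompactSupport φ)
    (hψ : HasCompactSupport ψ) (e : E3) : HasCompactSupport (dualityField a b w φ ψ e) := by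
  refine .intro (hφ.isCompact.union hψ) fun x hx => ?_
  have hφx : φ x = 0 := image_eq_zero_of_notMem_tsupport fun h => hx (.inl h)
  have hψx : ψ x = 0 := image_eq_zero_of_notMem_tsupport fun h => hx (.inr h)
  have hgx : gradient φ x = 0 := image_eq_zero_of_notMem_tsupport fun h =>
    hx (.inl (tsupport_gradient_subset φ h))
  simp only [dualityField, hφx, hψx, hgx, cross3_zero_left, cross3_zero_right, inner_zero_left,
    zero_smul, smul_zero, add_zero, sub_zero]

theorem divg_dualityField (ha : ContDiff ℝ 1 a) (hb : ContDiff ℝ 1 b) (hw : ContDiff ℝ 2 w)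
    (hφ : ContDiff ℝ 2 φ) (hψ : ContDiff ℝ 1 ψ) (e x : E3) :
    divg (dualityField a b w φ ψ e) x
      = (ψ x * ⟪curl3 b x, e⟫ - ⟪b x, cross3 (gradient ψ x) e⟫)
        + (⟪curl3 a x, cross3 (gradient φ x) e⟫ + divg (gradient φ) x * ⟪a x, e⟫
          + ⟪gradient φ x, e⟫ * divg a x)
        + (φ x * divg (gradient w) x - divg (gradient φ) x * w x) := by
  have hgφ : ContDiff ℝ 1 (gradient φ) := contDiff_gradient hφ
  have h₁ : ContDiff ℝ 1 fun y => cross3 (b y) (ψ y • e) :=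
    contDiff_cross3 hb (hψ.smul contDiff_const)
  have h₂ : ContDiff ℝ 1 fun y =>
      cross3 (a y) (cross3 (gradient φ y) e) + ⟪gradient φ y, e⟫ • a y :=
    (contDiff_cross3 ha (contDiff_cross3 hgφ contDiff_const)).add
      ((hgφ.inner ℝ contDiff_const).smul ha)
  have h₃ : ContDiff ℝ 1 fun y => φ y • gradient w y - w y • gradient φ y :=
    ((hφ.of_le one_le_two).smul (contDiff_gradient hw)).sub ((hw.of_le one_le_two).smul hgφ)
  have hd {f : E3 → E3} (hf : ContDiff ℝ 1 f) : DifferentiableAt ℝ f x :=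
    hf.differentiable one_ne_zero x
  rw [← divg_cross3_smul_const (hψ.differentiable one_ne_zero x) (hd hb) e,
    ← divg_cross3_cross3_gradient_add hφ (hd ha) e, ← divg_smul_gradient_sub hφ hw,
    ← divg_add (hd h₁) (hd h₂), ← divg_add ((hd h₁).fun_add (hd h₂)) (hd h₃)]
  rfl

end DualityField

variable {φ ψ χ : ℝ → E3 → ℝ} {E₀ : E3 → E3}

theorem IsMaxwellSolution.deriv_sub_divg_dualityField (hE : IsMaxwellSolution τ E B j m ρ)
    (hE₀ : ContDiff ℝ 2 E₀) (hφ : ContDiff ℝ 2 (Function.uncurry φ))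
    (hψ : ContDiff ℝ 1 (Function.uncurry ψ))
    (hφψ : ∀ t x, HasDerivAt (fun s => φ s x) (ψ t x) t)
    (hψχ : ∀ t x, HasDerivAt (fun s => ψ s x) (χ t x) t) (e : E3) {t : ℝ} (ht : t ∈ Ioo 0 τ)
    (x : E3) :
    deriv (fun s => ψ s x * ⟪E s x - E₀ x, e⟫ - ⟪B s x, cross3 (gradient (φ s) x) e⟫) t
        - divg (dualityField (E t) (B t) (fun y => ⟪E₀ y, e⟫) (φ t) (ψ t) e) x
      = (χ t x - divg (gradient (φ t)) x) * ⟪E t x - E₀ x, e⟫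
        - φ t x * divg (gradient fun y => ⟪E₀ y, e⟫) x
        - (ψ t x * ⟪j t x, e⟫ + ⟪gradient (φ t) x, ρ t x • e - cross3 e (m t x)⟫) := by
  have ht' := Ioo_subset_Ico_self ht
  have hcross : HasDerivAt (fun s => cross3 (gradient (φ s) x) e)
      (cross3 (gradient (ψ t) x) e) t := by
    have hg := hasDerivAt_gradient hφ hφψ t x
    have := (hasFDerivAt_cross3 hg.differentiableAt (differentiableAt_const e)).hasDerivAt
    simpa [cross3_zero_right, hg.deriv] using this
  have hd := ((hψχ t x).mul (((hE.hasDerivAt_electric t ht x).sub_const (E₀ x)).inner ℝ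
    (hasDerivAt_const t e))).sub ((hE.hasDerivAt_magnetic t ht x).inner ℝ hcross)
  rw [HasDerivAt.deriv (f := fun s => ψ s x * ⟪E s x - E₀ x, e⟫
    - ⟪B s x, cross3 (gradient (φ s) x) e⟫) hd, divg_dualityField (hE.contDiff_electric ht')
    (hE.contDiff_magnetic ht') (hE₀.inner ℝ contDiff_const)
    (contDiff_slice hφ t) (contDiff_slice hψ t), hE.divg_electric t ht x]
  have hm : ⟪m t x, cross3 (gradient (φ t) x) e⟫ = ⟪gradient (φ t) x, cross3 e (m t x)⟫ := by
    rw [real_inner_comm, inner_cross3_left]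
  simp only [inner_sub_left, inner_sub_right, inner_neg_left, inner_zero_right, inner_smul_right,
    hm]
  ring

theorem IsMaxwellSolution.hasDerivAt_integral (hE : IsMaxwellSolution τ E B j m ρ)
    (hE₀ : ContDiff ℝ 2 E₀) (hφ : ContDiff ℝ 2 (Function.uncurry φ))
    (hψ : ContDiff ℝ 1 (Function.uncurry ψ))
    (hφψ : ∀ t x, HasDerivAt (fun s => φ s x) (ψ t x) t)
    (hψχ : ∀ t x, HasDerivAt (fun s => ψ s x) (χ t x) t) {K : Set E3} (hK : IsCompact K)
    (hφK : ∀ t ∈ Ioo 0 τ, ∀ x, x ∉ K → φ t x = 0) (hψK : ∀ t ∈ Ioo 0 τ, ∀ x, x ∉ K → ψ t x = 0)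
    (e : E3) {t : ℝ} (ht : t ∈ Ioo 0 τ) :
    HasDerivAt (fun s => ∫ x, (ψ s x * ⟪E s x - E₀ x, e⟫ - ⟪B s x, cross3 (gradient (φ s) x) e⟫))
      (∫ x, ((χ t x - divg (gradient (φ t)) x) * ⟪E t x - E₀ x, e⟫
        - φ t x * divg (gradient fun y => ⟪E₀ y, e⟫) x
        - (ψ t x * ⟪j t x, e⟫ + ⟪gradient (φ t) x, ρ t x • e - cross3 e (m t x)⟫))) t := by
  have hgK : ∀ t ∈ Ioo 0 τ, ∀ x, x ∉ K → gradient (φ t) x = 0 := fun t ht x hx =>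
    image_eq_zero_of_notMem_tsupport fun h => hx <|
      closure_minimal (fun y (hy : φ t y ≠ 0) => by_contra fun hyK => hy (hφK t ht y hyK))
        hK.isClosed (tsupport_gradient_subset (φ t) h)
  have hmono : Ioo 0 τ ×ˢ (univ : Set E3) ⊆ Ico 0 τ ×ˢ univ :=
    prod_mono Ioo_subset_Ico_self subset_rfl
  obtain ⟨hint, hderiv⟩ := hasDerivAt_integral_of_contDiffOn (U := Ioo 0 τ)
    (h := fun s x => ψ s x * ⟪E s x - E₀ x, e⟫ - ⟪B s x, cross3 (gradient (φ s) x) e⟫)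
    volume isOpen_Ioo hK
    ((hψ.contDiffOn.mul (((hE.contDiffOn_electric.mono hmono).sub
        ((hE₀.of_le one_le_two).comp contDiff_snd).contDiffOn).inner ℝ contDiffOn_const)).sub
      ((hE.contDiffOn_magnetic.mono hmono).inner ℝ
        (contDiff_cross3 (contDiff_uncurry_gradient hφ) contDiff_const).contDiffOn))
    (fun s hs x hx => by
      simp only [hψK s hs x hx, hgK s hs x hx, cross3_zero_left, inner_zero_right, zero_mul,
        sub_zero]) ht
  have hw : ContDiff ℝ 2 fun y => ⟪E₀ y, e⟫ := hE₀.inner ℝ contDiff_const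
  have ht' := Ioo_subset_Ico_self ht
  have hZ := contDiff_dualityField (hE.contDiff_electric ht') (hE.contDiff_magnetic ht')
    hw (contDiff_slice hφ t) (contDiff_slice hψ t) e
  have hZc := hasCompactSupport_dualityField (E t) (B t) (fun y => ⟪E₀ y, e⟫)
    (.intro hK (hφK t ht)) (.intro hK (hψK t ht)) e
  convert hderiv using 1
  rw [← sub_zero (∫ x, deriv _ _), ← integral_divg_eq_zero hZ hZc,
    ← integral_sub hint (integrable_divg hZ hZc)]
  congr 1 with x
  exact (hE.deriv_sub_divg_dualityField hE₀ hφ hψ hφψ hψχ e ht x).symm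

end MaxwellDuality

section SoftDistance

/-- The distance `√(ε² + ‖x - x₁‖²)` to `x₁`, smoothed at scale `ε` so that the singular kernels of
the wave equation become smooth. -/
def softDist (ε : ℝ) (x₁ x : E3) : ℝ := √(ε ^ 2 + ‖x - x₁‖ ^ 2)

/-- The gradient of `softDist ε x₁`, a smooth substitute for the unit vector `(x - x₁)/‖x - x₁‖`. -/
def softDir (ε : ℝ) (x₁ x : E3) : E3 := (softDist ε x₁ x)⁻¹ • (x - x₁)

variable {ε : ℝ} (x₁ x : E3)

theorem softDist_pos (hε : 0 < ε) : 0 < softDist ε x₁ x := by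
  unfold softDist
  positivity

theorem softDist_sq (ε : ℝ) : softDist ε x₁ x ^ 2 = ε ^ 2 + ‖x - x₁‖ ^ 2 :=
  Real.sq_sqrt (by positivity)

theorem norm_sub_lt_softDist (hε : 0 < ε) : ‖x - x₁‖ < softDist ε x₁ x :=
  Real.lt_sqrt_of_sq_lt (by linarith [pow_pos hε 2])

theorem contDiff_softDist {n : WithTop ℕ∞} (hε : 0 < ε) : ContDiff ℝ n (softDist ε x₁) :=
  (contDiff_const.add ((contDiff_norm_sq ℝ).comp (contDiff_id.sub contDiff_const))).sqrt
    fun x => (add_pos_of_pos_of_nonneg (pow_pos hε 2) (sq_nonneg ‖x - x₁‖)).ne'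

theorem contDiff_softDir {n : WithTop ℕ∞} (hε : 0 < ε) : ContDiff ℝ n (softDir ε x₁) :=
  ((contDiff_softDist x₁ hε).inv fun x => (softDist_pos x₁ x hε).ne').smul
    (contDiff_id.sub contDiff_const)

theorem hasFDerivAt_softDist (hε : 0 < ε) :
    HasFDerivAt (softDist ε x₁) (innerSL ℝ (softDir ε x₁ x)) x := by
  have h := (((hasStrictFDerivAt_norm_sq (x - x₁)).hasFDerivAt.comp x
    ((hasFDerivAt_id x).sub_const x₁)).const_add (ε ^ 2)).sqrt
      (add_pos_of_pos_of_nonneg (pow_pos hε 2) (sq_nonneg ‖x - x₁‖)).ne'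
  refine h.congr_fderiv ?_
  ext v
  simp [softDir, softDist]
  ring

theorem norm_softDir_sq (hε : 0 < ε) :
    ‖softDir ε x₁ x‖ ^ 2 = 1 - ε ^ 2 * (softDist ε x₁ x)⁻¹ ^ 2 := by
  have hpos := softDist_pos x₁ x hε
  rw [softDir, norm_smul, mul_pow, norm_inv, Real.norm_of_nonneg hpos.le,
    show ‖x - x₁‖ ^ 2 = softDist ε x₁ x ^ 2 - ε ^ 2 by rw [softDist_sq]; ring]
  field_simp

theorem norm_softDir_le_one (hε : 0 < ε) : ‖softDir ε x₁ x‖ ≤ 1 := by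
  rw [← sq_le_one_iff₀ (norm_nonneg _), norm_softDir_sq x₁ x hε]
  simpa using by positivity

theorem hasFDerivAt_inv_softDist (hε : 0 < ε) : HasFDerivAt (fun y => (softDist ε x₁ y)⁻¹)
    (-(softDist ε x₁ x)⁻¹ ^ 2 • innerSL ℝ (softDir ε x₁ x)) x := by
  refine ((hasDerivAt_inv (softDist_pos x₁ x hε).ne').comp_hasFDerivAt x
    (hasFDerivAt_softDist x₁ x hε)).congr_fderiv ?_
  rw [inv_pow]

theorem fderiv_softDir (hε : 0 < ε) (v : E3) : fderiv ℝ (softDir ε x₁) x v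
    = (softDist ε x₁ x)⁻¹ • (v - ⟪softDir ε x₁ x, v⟫ • softDir ε x₁ x) := by
  have h := (hasFDerivAt_inv_softDist x₁ x hε).fun_smul ((hasFDerivAt_id x).sub_const x₁)
  rw [HasFDerivAt.fderiv (f := softDir ε x₁) h]
  simp only [softDir, add_apply, smul_apply, ContinuousLinearMap.smulRight_apply,
    ContinuousLinearMap.id_apply, innerSL_apply_apply, id, smul_eq_mul, smul_sub, smul_smul]
  module

theorem divg_softDir (hε : 0 < ε) : divg (softDir ε x₁) x
    = (softDist ε x₁ x)⁻¹ * (2 + ε ^ 2 * (softDist ε x₁ x)⁻¹ ^ 2) := by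
  have hnorm := norm_softDir_sq x₁ x hε
  rw [← real_inner_self_eq_norm_sq, inner_eq_sum] at hnorm
  rw [divg_eq_fderiv ((contDiff_softDir (n := 1) x₁ hε).differentiable one_ne_zero x)]
  simp only [fderiv_softDir x₁ x hε, Fin.sum_univ_three, PiLp.smul_apply, PiLp.sub_apply, inner_e3,
    smul_eq_mul]
  simp only [e3, PiLp.single_apply, if_true]
  linear_combination -(softDist ε x₁ x)⁻¹ * hnorm

theorem norm_fderiv_softDir_le (hε : 0 < ε) (v : E3) :
    ‖fderiv ℝ (softDir ε x₁) x v‖ ≤ 2 * (softDist ε x₁ x)⁻¹ * ‖v‖ := by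
  have hpos := softDist_pos x₁ x hε
  have hω := norm_softDir_le_one x₁ x hε
  have hproj : ‖⟪softDir ε x₁ x, v⟫ • softDir ε x₁ x‖ ≤ ‖v‖ := by
    rw [norm_smul]
    calc _ ≤ ‖softDir ε x₁ x‖ * ‖v‖ * ‖softDir ε x₁ x‖ := by
            gcongr
            exact norm_inner_le_norm _ _
      _ ≤ 1 * ‖v‖ * 1 := by gcongr
      _ = ‖v‖ := by ring
  rw [fderiv_softDir x₁ x hε, norm_smul, norm_inv, Real.norm_of_nonneg hpos.le, mul_right_comm,
    mul_comm]
  gcongr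
  linarith [norm_sub_le v (⟪softDir ε x₁ x, v⟫ • softDir ε x₁ x)]

end SoftDistance

section RetardedKernel

/-- The radial wave profile `g(T - t - ρ)/ρ` focusing at `(T, x₁)`, with `ρ = softDist ε x₁ x`; for
`ε = 0` it solves the wave equation away from `x₁`. -/
def retKernel (ε T : ℝ) (x₁ : E3) (g : ℝ → ℝ) (t : ℝ) (x : E3) : ℝ :=
  g (T - t - softDist ε x₁ x) * (softDist ε x₁ x)⁻¹

/-- The d'Alembertian of `retKernel ε T x₁ g`, an approximation of the Dirac mass at `x₁`. -/
def boxKernel (ε T : ℝ) (x₁ : E3) (g : ℝ → ℝ) (t : ℝ) (x : E3) : ℝ :=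
  ε ^ 2 * (softDist ε x₁ x)⁻¹ ^ 2 * (retKernel ε T x₁ (deriv (deriv g)) t x
    + 3 * (softDist ε x₁ x)⁻¹ * retKernel ε T x₁ (deriv g) t x
    + 3 * (softDist ε x₁ x)⁻¹ ^ 2 * retKernel ε T x₁ g t x)

variable {ε : ℝ} (T : ℝ) (x₁ : E3) {g : ℝ → ℝ}

theorem contDiff_retKernel {n : WithTop ℕ∞} (hε : 0 < ε) (hg : ContDiff ℝ n g) :
    ContDiff ℝ n (Function.uncurry (retKernel ε T x₁ g)) := by
  have hρ : ContDiff ℝ n fun p : ℝ × E3 => softDist ε x₁ p.2 :=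
    (contDiff_softDist x₁ hε).comp contDiff_snd
  exact (hg.comp ((contDiff_const.sub contDiff_fst).sub hρ)).mul
    (hρ.inv fun p => (softDist_pos x₁ p.2 hε).ne')

theorem hasDerivAt_retKernel (ε : ℝ) (hg : Differentiable ℝ g) (t : ℝ) (x : E3) :
    HasDerivAt (fun s => retKernel ε T x₁ g s x) (-retKernel ε T x₁ (deriv g) t x) t := by
  have h := ((hg _).hasDerivAt.comp t (((hasDerivAt_id t).const_sub T).sub_const
    (softDist ε x₁ x))).mul_const (softDist ε x₁ x)⁻¹
  simpa [retKernel] using h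

theorem hasFDerivAt_retKernel (hε : 0 < ε) (hg : Differentiable ℝ g) (t : ℝ) (x : E3) :
    HasFDerivAt (retKernel ε T x₁ g t) (-(retKernel ε T x₁ (deriv g) t x
      + (softDist ε x₁ x)⁻¹ * retKernel ε T x₁ g t x) • innerSL ℝ (softDir ε x₁ x)) x := by
  have h := ((hg (T - t - softDist ε x₁ x)).hasDerivAt.comp_hasFDerivAt x
    ((hasFDerivAt_softDist x₁ x hε).const_sub (T - t))).mul (hasFDerivAt_inv_softDist x₁ x hε)
  refine h.congr_fderiv ?_
  ext v
  simp only [retKernel, Function.comp_apply, add_apply, smul_apply, neg_apply, smul_eq_mul]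
  ring

theorem gradient_retKernel (hε : 0 < ε) (hg : Differentiable ℝ g) (t : ℝ) (x : E3) :
    gradient (retKernel ε T x₁ g t) x = -(retKernel ε T x₁ (deriv g) t x
      + (softDist ε x₁ x)⁻¹ * retKernel ε T x₁ g t x) • softDir ε x₁ x := by
  refine ext_inner_right ℝ fun v => ?_
  rw [inner_gradient_left, (hasFDerivAt_retKernel T x₁ hε hg t x).fderiv, real_inner_smul_left,
    smul_apply, smul_eq_mul, innerSL_apply_apply]

theorem divg_gradient_retKernel (hε : 0 < ε) (hg : ContDiff ℝ 2 g) (t : ℝ) (x : E3) :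
    divg (gradient (retKernel ε T x₁ g t)) x
      = retKernel ε T x₁ (deriv (deriv g)) t x - boxKernel ε T x₁ g t x := by
  have hg1 : Differentiable ℝ g := hg.differentiable two_ne_zero
  have hg2 : Differentiable ℝ (deriv g) :=
    (contDiff_succ_iff_deriv (n := 1).1 hg).2.2.differentiable one_ne_zero
  have hcoef := ((hasFDerivAt_retKernel T x₁ hε hg2 t x).fun_add
    ((hasFDerivAt_inv_softDist x₁ x hε).fun_mul (hasFDerivAt_retKernel T x₁ hε hg1 t x))).fun_neg
  rw [show gradient (retKernel ε T x₁ g t) = _ from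
    funext fun x => gradient_retKernel T x₁ hε hg1 t x,
    divg_smul hcoef.differentiableAt
      ((contDiff_softDir (n := 1) x₁ hε).differentiable one_ne_zero x),
    divg_softDir x₁ x hε, HasFDerivAt.fderiv hcoef]
  simp only [neg_apply, add_apply, smul_apply, smul_eq_mul, innerSL_apply_apply,
    real_inner_self_eq_norm_sq, norm_softDir_sq x₁ x hε, boxKernel]
  ring

theorem retKernel_eq_zero (hε : 0 < ε) (hg : ∀ s < 0, g s = 0) {t : ℝ} {x : E3}
    (h : T - t ≤ ‖x - x₁‖) : retKernel ε T x₁ g t x = 0 := by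
  rw [retKernel, hg _ (by linarith [norm_sub_lt_softDist x₁ x hε]), zero_mul]

theorem retKernel_nonneg (hε : 0 < ε) (hg : ∀ s, 0 ≤ g s) (t : ℝ) (x : E3) :
    0 ≤ retKernel ε T x₁ g t x :=
  mul_nonneg (hg _) (inv_pos.2 (softDist_pos x₁ x hε)).le

end RetardedKernel

section KernelMass

/-- The area `4π` of the unit sphere. -/
def sphereArea : ℝ := 3 * volume.real (ball (0 : E3) 1)

theorem sphereArea_nonneg : 0 ≤ sphereArea := by
  unfold sphereArea
  positivity

variable {ε : ℝ} {h : ℝ → ℝ}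

theorem integrable_comp_sqrt_add_sq_mul (hε : 0 < ε) (hc : Continuous h)
    (hcs : HasCompactSupport h) :
    Integrable fun y => h (√(ε ^ 2 + y ^ 2)) * (y * (√(ε ^ 2 + y ^ 2))⁻¹) := by
  have hρc : Continuous fun y : ℝ => √(ε ^ 2 + y ^ 2) := by fun_prop
  obtain ⟨R, hR⟩ := hcs.isCompact.isBounded.subset_closedBall 0
  refine Continuous.integrable_of_hasCompactSupport ?_ (.intro (isCompact_closedBall 0 R) ?_)
  · exact (hc.comp hρc).mul (continuous_id.mul (hρc.inv₀ fun y => by positivity))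
  · intro y hy
    have hle : |y| ≤ √(ε ^ 2 + y ^ 2) := Real.abs_le_sqrt (by linarith [sq_nonneg ε])
    have hy' : √(ε ^ 2 + y ^ 2) ∉ tsupport h := fun hmem => hy <| mem_closedBall_zero_iff.2 <|
      hle.trans <| (le_abs_self _).trans (mem_closedBall_zero_iff.1 (hR hmem))
    rw [image_eq_zero_of_notMem_tsupport hy', zero_mul]

theorem integral_Ioi_comp_sqrt_add_sq_mul (hε : 0 < ε) (hc : Continuous h)
    (hcs : HasCompactSupport h) :
    ∫ y in Ioi 0, h (√(ε ^ 2 + y ^ 2)) * (y * (√(ε ^ 2 + y ^ 2))⁻¹) = ∫ s in Ioi ε, h s := by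
  have hderiv (y : ℝ) : HasDerivAt (fun y => √(ε ^ 2 + y ^ 2)) (y * (√(ε ^ 2 + y ^ 2))⁻¹) y := by
    refine (((hasDerivAt_pow 2 y).const_add (ε ^ 2)).sqrt (by positivity)).congr_deriv ?_
    simp
    field_simp
  have hlim : Tendsto (fun y => √(ε ^ 2 + y ^ 2)) atTop atTop :=
    tendsto_atTop_mono (fun y => (le_abs_self y).trans
      (Real.abs_le_sqrt (by linarith [sq_nonneg ε]))) tendsto_id
  have hε0 : √(ε ^ 2 + 0 ^ 2) = ε := by
    rw [zero_pow two_ne_zero, add_zero, Real.sqrt_sq hε.le]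
  have hchange := integral_comp_mul_deriv_Ioi (a := 0) (by fun_prop) hlim
    (fun y _ => (hderiv y).hasDerivWithinAt) hc.continuousOn
    (hc.integrable_of_hasCompactSupport hcs).integrableOn
    (integrable_comp_sqrt_add_sq_mul hε hc hcs).integrableOn
  rwa [hε0] at hchange

theorem integral_Ioi_sq_mul_comp_sqrt_add_sq_le (hε : 0 < ε) (hc : Continuous h)
    (hcs : HasCompactSupport h) (h0 : ∀ s, 0 ≤ h s) :
    ∫ y in Ioi (0 : ℝ), y ^ 2 * (h (√(ε ^ 2 + y ^ 2)) * (√(ε ^ 2 + y ^ 2))⁻¹ ^ 2)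
      ≤ ∫ s, h s := by
  calc _ ≤ ∫ y in Ioi 0, h (√(ε ^ 2 + y ^ 2)) * (y * (√(ε ^ 2 + y ^ 2))⁻¹) := by
        refine integral_mono_of_nonneg (ae_of_all _ fun y => ?_)
          (integrable_comp_sqrt_add_sq_mul hε hc hcs).integrableOn ?_
        · exact mul_nonneg (sq_nonneg y) (mul_nonneg (h0 _) (sq_nonneg _))
        filter_upwards [ae_restrict_mem measurableSet_Ioi] with y hy
        have hle : y ≤ √(ε ^ 2 + y ^ 2) := Real.le_sqrt_of_sq_le (by linarith [sq_nonneg ε])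
        have hy1 : y * (√(ε ^ 2 + y ^ 2))⁻¹ ≤ 1 := mul_inv_le_one_of_le₀ hle (by positivity)
        have hy0 : 0 ≤ y * (√(ε ^ 2 + y ^ 2))⁻¹ := mul_nonneg (le_of_lt hy) (by positivity)
        calc _ = h (√(ε ^ 2 + y ^ 2))
              * ((y * (√(ε ^ 2 + y ^ 2))⁻¹) * (y * (√(ε ^ 2 + y ^ 2))⁻¹)) := by ring
          _ ≤ _ := mul_le_mul_of_nonneg_left (mul_le_of_le_one_right hy0 hy1) (h0 _)
    _ = ∫ s in Ioi ε, h s := integral_Ioi_comp_sqrt_add_sq_mul hε hc hcs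
    _ ≤ ∫ s, h s := setIntegral_le_integral (hc.integrable_of_hasCompactSupport hcs)
        (ae_of_all _ h0)

theorem integral_comp_softDist_mul_le (x₁ : E3) (hε : 0 < ε) (hc : Continuous h)
    (hcs : HasCompactSupport h) (h0 : ∀ s, 0 ≤ h s) :
    ∫ x, h (softDist ε x₁ x) * (softDist ε x₁ x)⁻¹ ^ 2 ≤ sphereArea * ∫ s, h s := by
  set F : ℝ → ℝ := fun y => h (√(ε ^ 2 + y ^ 2)) * (√(ε ^ 2 + y ^ 2))⁻¹ ^ 2
  calc _ = ∫ x : E3, F ‖x‖ := integral_sub_right_eq_self (fun x : E3 => F ‖x‖) x₁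
    _ = sphereArea * ∫ y in Ioi (0 : ℝ), y ^ 2 * F y := by
        rw [integral_fun_norm_addHaar volume F]
        simp [sphereArea, mul_assoc]
    _ ≤ sphereArea * ∫ s, h s := mul_le_mul_of_nonneg_left
        (integral_Ioi_sq_mul_comp_sqrt_add_sq_le hε hc hcs h0) sphereArea_nonneg

/-- A `C²` probability density on `ℝ` supported in `[0, ∞)`: the profile of a retarded wave. -/
structure IsPulse (g : ℝ → ℝ) : Prop where
  contDiff : ContDiff ℝ 2 g
  hasCompactSupport : HasCompactSupport g
  nonneg : ∀ s, 0 ≤ g s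
  integral_eq_one : ∫ s, g s = 1
  eq_zero_of_nonpos : ∀ s ≤ 0, g s = 0

theorem exists_isPulse {δ : ℝ} (hδ : 0 < δ) : ∃ g, IsPulse g ∧ ∀ s, δ ≤ s → g s = 0 := by
  let b : ContDiffBump (δ / 2) := ⟨δ / 4, δ / 2, by positivity, by linarith⟩
  have hzero {s : ℝ} (hs : δ / 2 ≤ |s - δ / 2|) : b.normed volume s = 0 := by
    rw [← Function.notMem_support, b.support_normed_eq, mem_ball, Real.dist_eq, not_lt]
    exact hs
  exact ⟨b.normed volume, ⟨b.contDiff_normed, b.hasCompactSupport_normed, b.nonneg_normed,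
    b.integral_normed, fun s hs => hzero (le_abs.2 (.inr (by linarith)))⟩,
    fun s hs => hzero (le_abs.2 (.inl (by linarith)))⟩

theorem deriv_eq_zero_of_forall_nonpos {g : ℝ → ℝ} (hg : Differentiable ℝ g)
    (h0 : ∀ s ≤ 0, g s = 0) {s : ℝ} (hs : s ≤ 0) : deriv g s = 0 := by
  have hconst : HasDerivWithinAt g 0 (Iic s) s := (hasDerivWithinAt_const s (Iic s) (0 : ℝ)).congr
    (fun r hr => h0 r (hr.trans hs)) (h0 s hs)
  exact (uniqueDiffWithinAt_Iic s).eq_deriv _ (hg s).hasDerivAt.hasDerivWithinAt hconst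

namespace IsPulse

variable {g : ℝ → ℝ} (hg : IsPulse g)
include hg

theorem contDiff_deriv : ContDiff ℝ 1 (deriv g) :=
  (contDiff_succ_iff_deriv (n := 1).1 hg.contDiff).2.2

theorem differentiable : Differentiable ℝ g :=
  hg.contDiff.differentiable two_ne_zero

theorem deriv_eq_zero_of_nonpos : ∀ s ≤ 0, deriv g s = 0 :=
  fun _ => deriv_eq_zero_of_forall_nonpos hg.differentiable hg.eq_zero_of_nonpos

theorem deriv_deriv_eq_zero_of_nonpos : ∀ s ≤ 0, deriv (deriv g) s = 0 :=
  fun _ => deriv_eq_zero_of_forall_nonpos (hg.contDiff_deriv.differentiable one_ne_zero)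
    hg.deriv_eq_zero_of_nonpos

variable (T t : ℝ) (x₁ : E3)

theorem continuous_retKernel_slice (hε : 0 < ε) : Continuous (retKernel ε T x₁ g t) :=
  (contDiff_retKernel (n := 0) T x₁ hε (hg.contDiff.of_le (by simp))).continuous.comp
    (Continuous.prodMk_right t)

theorem retKernel_eq_zero_of_notMem (hε : 0 < ε) {x : E3} (hx : x ∉ closedBall x₁ (T - t)) :
    retKernel ε T x₁ g t x = 0 := by
  rw [mem_closedBall, dist_eq_norm, not_le] at hx
  exact retKernel_eq_zero T x₁ hε (fun s hs => hg.eq_zero_of_nonpos s hs.le) hx.le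

theorem integral_retKernel_mul_inv_le (hε : 0 < ε) :
    ∫ x, retKernel ε T x₁ g t x * (softDist ε x₁ x)⁻¹ ≤ sphereArea := by
  have hcs : HasCompactSupport fun s => g (T - t - s) :=
    hg.hasCompactSupport.comp_homeomorph (Homeomorph.subLeft (T - t))
  calc _ = ∫ x, g (T - t - softDist ε x₁ x) * (softDist ε x₁ x)⁻¹ ^ 2 := by
        simp only [retKernel, mul_assoc, sq]
    _ ≤ sphereArea * ∫ s, g (T - t - s) := integral_comp_softDist_mul_le x₁ hε
        (h := fun s => g (T - t - s)) (by have := hg.contDiff.continuous; fun_prop) hcs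
        fun s => hg.nonneg _
    _ = sphereArea := by rw [integral_sub_left_eq_self g volume, hg.integral_eq_one, mul_one]

theorem integrable_retKernel_mul_inv (hε : 0 < ε) :
    Integrable fun x => retKernel ε T x₁ g t x * (softDist ε x₁ x)⁻¹ := by
  refine Continuous.integrable_of_hasCompactSupport ?_
    (.intro (isCompact_closedBall x₁ (T - t)) fun x hx => ?_)
  · exact (hg.continuous_retKernel_slice T t x₁ hε).mul <| (contDiff_softDist
      (n := 0) x₁ hε).continuous.inv₀ fun x => (softDist_pos x₁ x hε).ne'
  · rw [hg.retKernel_eq_zero_of_notMem T t x₁ hε hx, zero_mul]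

theorem retKernel_le (hε : 0 < ε) (x : E3) :
    retKernel ε T x₁ g t x ≤ (T - t) * (retKernel ε T x₁ g t x * (softDist ε x₁ x)⁻¹) := by
  have hρ := softDist_pos x₁ x hε
  rcases le_total (T - t) (softDist ε x₁ x) with h | h
  · rw [retKernel, hg.eq_zero_of_nonpos _ (by linarith)]
    simp
  · have hK := retKernel_nonneg T x₁ hε hg.nonneg t x
    calc _ = softDist ε x₁ x * (retKernel ε T x₁ g t x * (softDist ε x₁ x)⁻¹) := by field_simp
      _ ≤ _ := by gcongr

theorem integral_retKernel_le (hε : 0 < ε) {t : ℝ} (ht : t ≤ T) :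
    ∫ x, retKernel ε T x₁ g t x ≤ (T - t) * sphereArea := by
  calc _ ≤ ∫ x, (T - t) * (retKernel ε T x₁ g t x * (softDist ε x₁ x)⁻¹) :=
        integral_mono_of_nonneg (ae_of_all _ (retKernel_nonneg T x₁ hε hg.nonneg t))
          ((hg.integrable_retKernel_mul_inv T t x₁ hε).const_mul _)
          (ae_of_all _ (hg.retKernel_le T t x₁ hε))
    _ ≤ (T - t) * sphereArea := by
        rw [integral_const_mul]
        exact mul_le_mul_of_nonneg_left (hg.integral_retKernel_mul_inv_le T t x₁ hε)
          (sub_nonneg.2 ht)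

end IsPulse

end KernelMass

section Concentration

/-- The integral of `(1 + ‖y‖²)^(-5/2)` over `ℝ³`, a third of the total mass of the kernels
`boxKernel` in the limit `ε → 0`. -/
def bubbleMass : ℝ := ∫ y : E3, (softDist 1 0 y)⁻¹ ^ 5

theorem integrable_inv_softDist_pow_five : Integrable fun y : E3 => (softDist 1 0 y)⁻¹ ^ 5 := by
  refine (integrable_rpow_neg_one_add_norm_sq (E := E3) (μ := volume) (r := 5)
    (by simp; norm_num)).congr (ae_of_all _ fun y => ?_)
  have h0 : (0 : ℝ) ≤ 1 + ‖y‖ ^ 2 := by positivity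
  simp only [softDist, sub_zero, one_pow]
  rw [Real.sqrt_eq_rpow, ← Real.rpow_neg h0, ← Real.rpow_mul_natCast h0]
  norm_num

theorem bubbleMass_pos : 0 < bubbleMass := by
  have hpos (y : E3) : 0 < (softDist 1 0 y)⁻¹ ^ 5 :=
    pow_pos (inv_pos.2 (softDist_pos 0 y one_pos)) 5
  refine (integral_pos_iff_support_of_nonneg (fun y => (hpos y).le)
    integrable_inv_softDist_pow_five).2 ?_
  rw [Function.support_eq_univ fun y => (hpos y).ne']
  simp

variable {ε T : ℝ} (x₁ : E3)

theorem softDist_add_smul (hε : 0 < ε) (y : E3) :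
    softDist ε x₁ (x₁ + ε • y) = ε * softDist 1 0 y := by
  simp only [softDist, add_sub_cancel_left, norm_smul, Real.norm_of_nonneg hε.le, sub_zero]
  rw [show ε ^ 2 + (ε * ‖y‖) ^ 2 = ε ^ 2 * (1 ^ 2 + ‖y‖ ^ 2) by ring,
    Real.sqrt_mul (sq_nonneg ε), Real.sqrt_sq hε.le]

/-- The function `ε² ρ⁻⁵ w(t, x, ρ)`, with `ρ = softDist ε x₁ x`, in the blown up variable `y` given
by `x = x₁ + ε y`. -/
def blowUp (x₁ : E3) (w : ℝ → E3 → ℝ → ℝ) (ε t : ℝ) (y : E3) : ℝ :=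
  (softDist 1 0 y)⁻¹ ^ 5 * w t (x₁ + ε • y) (ε * softDist 1 0 y)

theorem integral_eq_integral_blowUp (hε : 0 < ε) (w : ℝ → E3 → ℝ → ℝ) (t : ℝ) :
    ∫ x, ε ^ 2 * (softDist ε x₁ x)⁻¹ ^ 5 * w t x (softDist ε x₁ x) = ∫ y, blowUp x₁ w ε t y := by
  set G : E3 → ℝ := fun x => ε ^ 2 * (softDist ε x₁ x)⁻¹ ^ 5 * w t x (softDist ε x₁ x)
  have hscale := Measure.integral_comp_smul (volume : Measure E3) (fun x => G (x₁ + x)) ε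
  rw [finrank_euclideanSpace_fin, abs_of_pos (by positivity), smul_eq_mul,
    integral_add_left_eq_self G x₁] at hscale
  calc ∫ x, G x = ε ^ 3 * ∫ y, G (x₁ + ε • y) := by rw [hscale]; field_simp
    _ = _ := by
      rw [← integral_const_mul]
      congr 1 with y
      have hρ := softDist_pos 0 y one_pos
      simp only [G, blowUp, softDist_add_smul x₁ hε]
      field_simp

variable {w : ℝ → E3 → ℝ → ℝ}
  (hw : ContinuousOn (fun p : ℝ × E3 × ℝ => w p.1 p.2.1 p.2.2) (Icc 0 T ×ˢ univ))
include hw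

theorem continuous_blowUp {t : ℝ} (ht : t ∈ Icc 0 T) :
    Continuous fun p : ℝ × E3 => blowUp x₁ w p.1 t p.2 := by
  have hρ : Continuous (softDist 1 0) := (contDiff_softDist (n := 0) 0 one_pos).continuous
  refine (((hρ.comp continuous_snd).inv₀ fun p => (softDist_pos 0 p.2 one_pos).ne').pow 5).mul
    (hw.comp_continuous (f := fun p : ℝ × E3 => (t, x₁ + p.1 • p.2, p.1 * softDist 1 0 p.2))
      (by fun_prop) fun p => ⟨ht, mem_univ _⟩)

theorem continuousOn_blowUp (ε : ℝ) (y : E3) :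
    ContinuousOn (fun t => blowUp x₁ w ε t y) (Icc 0 T) :=
  continuousOn_const.mul (hw.comp (f := fun t => (t, x₁ + ε • y, ε * softDist 1 0 y))
    (by fun_prop) fun _ ht => ⟨ht, mem_univ _⟩)

variable (hw0 : ∀ t x r, T - t ≤ r → w t x r = 0)
include hw0

theorem exists_norm_blowUp_le :
    ∃ b : E3 → ℝ, Integrable b ∧ ∀ ε > 0, ∀ t ∈ Icc 0 T, ∀ y, ‖blowUp x₁ w ε t y‖ ≤ b y := by
  obtain ⟨C, hC⟩ := (isCompact_Icc.prod ((isCompact_closedBall x₁ T).prod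
    (isCompact_Icc (a := (0 : ℝ)) (b := T)))).exists_bound_of_continuousOn
    (hw.mono (prod_mono_right (subset_univ _)))
  refine ⟨_, integrable_inv_softDist_pow_five.mul_const (max C 0), fun ε hε t ht y => ?_⟩
  have hρ := softDist_pos 0 y one_pos
  rw [blowUp, norm_mul, Real.norm_of_nonneg (by positivity)]
  gcongr
  rcases le_or_gt (T - t) (ε * softDist 1 0 y) with hle | hlt
  · simp [hw0 _ _ _ hle]
  have hy : ε * ‖y‖ ≤ T := by
    have := mul_le_mul_of_nonneg_left (norm_sub_lt_softDist 0 y one_pos).le hε.le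
    rw [sub_zero] at this
    linarith [ht.1]
  refine (hC (t, x₁ + ε • y, ε * softDist 1 0 y) ⟨ht, ?_, by positivity, by linarith [ht.1]⟩).trans
    (le_max_left _ _)
  rwa [mem_closedBall, dist_self_add_left, norm_smul, Real.norm_of_nonneg hε.le]

theorem tendsto_integral_blowUp {t : ℝ} (ht : t ∈ Icc 0 T) :
    Tendsto (fun ε => ∫ y, blowUp x₁ w ε t y) (𝓝[>] 0) (𝓝 (bubbleMass * w t x₁ 0)) := by
  obtain ⟨b, hb, hle⟩ := exists_norm_blowUp_le x₁ hw hw0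
  have hc := continuous_blowUp x₁ hw ht
  rw [bubbleMass, ← integral_mul_const]
  refine tendsto_integral_filter_of_dominated_convergence b
    (.of_forall fun ε => (hc.comp (Continuous.prodMk_right ε)).aestronglyMeasurable)
    (eventually_mem_nhdsWithin.mono fun ε hε => ae_of_all _ (hle ε hε t ht)) hb
    (ae_of_all _ fun y => ?_)
  simpa [blowUp, Function.comp_def] using ((hc.comp (Continuous.prodMk_left y)).tendsto 0).mono_left
    (nhdsWithin_le_nhds (s := Ioi 0))

theorem tendsto_integral_softDist_pow_five_mul (hT : 0 ≤ T) :
    Tendsto (fun ε => ∫ t in 0..T, ∫ x, ε ^ 2 * (softDist ε x₁ x)⁻¹ ^ 5 * w t x (softDist ε x₁ x))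
      (𝓝[>] 0) (𝓝 (∫ t in 0..T, bubbleMass * w t x₁ 0)) := by
  obtain ⟨b, hb, hle⟩ := exists_norm_blowUp_le x₁ hw hw0
  have hsub : uIoc 0 T ⊆ Icc 0 T := by
    rw [uIoc_of_le hT]
    exact Ioc_subset_Icc_self
  have hlim : Tendsto (fun ε => ∫ t in 0..T, ∫ y, blowUp x₁ w ε t y) (𝓝[>] 0)
      (𝓝 (∫ t in 0..T, bubbleMass * w t x₁ 0)) := by
    refine intervalIntegral.tendsto_integral_filter_of_dominated_convergence
      (fun _ => ∫ y, b y) ?_ ?_ intervalIntegrable_const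
      (ae_of_all _ fun t ht => tendsto_integral_blowUp x₁ hw hw0 (hsub ht))
    · filter_upwards [self_mem_nhdsWithin] with ε hε
      have hcont : ContinuousOn (fun t => ∫ y, blowUp x₁ w ε t y) (Icc 0 T) :=
        continuousOn_of_dominated (fun t ht => ((continuous_blowUp x₁ hw ht).comp
          (Continuous.prodMk_right ε)).aestronglyMeasurable)
          (fun t ht => ae_of_all _ (hle ε hε t ht)) hb (ae_of_all _ (continuousOn_blowUp x₁ hw ε))
      exact (hcont.aestronglyMeasurable measurableSet_Icc).mono_set hsub
    · filter_upwards [self_mem_nhdsWithin] with ε hε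
      exact ae_of_all _ fun t ht =>
        norm_integral_le_of_norm_le hb (ae_of_all _ (hle ε hε t (hsub ht)))
  refine hlim.congr' (eventually_mem_nhdsWithin.mono fun ε hε => ?_)
  simp only [integral_eq_integral_blowUp x₁ hε]

end Concentration

section PointwiseRecovery

variable {T K : ℝ}

theorem IsPulse.intervalIntegral_comp_sub_left {g : ℝ → ℝ} (hg : IsPulse g) (hT : 0 ≤ T)
    (hgT : ∀ s, T ≤ s → g s = 0) : ∫ t in 0..T, g (T - t) = 1 := by
  rw [intervalIntegral.integral_comp_sub_left g T, sub_self, sub_zero,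
    intervalIntegral.integral_of_le hT, ← hg.integral_eq_one]
  refine setIntegral_eq_integral_of_forall_compl_eq_zero fun s hs => ?_
  rcases le_or_gt s 0 with h0 | h0
  · exact hg.eq_zero_of_nonpos s h0
  · exact hgT s (not_le.1 fun hle => hs ⟨h0, hle⟩).le

theorem abs_le_of_forall_isPulse (hT : 0 < T) {w : ℝ → ℝ} (hw : ContinuousOn w (Icc 0 T))
    (hK : ∀ g, IsPulse g → |∫ t in 0..T, g (T - t) * w t| ≤ K) : |w T| ≤ K := by
  refine le_of_forall_pos_le_add fun η hη => ?_
  obtain ⟨d, hd, hdw⟩ := Metric.continuousWithinAt_iff.1 (hw T ⟨hT.le, le_rfl⟩) η hη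
  obtain ⟨g, hg, hgz⟩ := exists_isPulse (lt_min hd hT)
  have hone : ∫ t in 0..T, g (T - t) = 1 := hg.intervalIntegral_comp_sub_left hT.le
    fun s hs => hgz s ((min_le_right _ _).trans hs)
  have hgc : Continuous fun t => g (T - t) := hg.contDiff.continuous.comp (by fun_prop)
  have hint := hgc.intervalIntegrable (μ := volume) 0 T
  have hintw : IntervalIntegrable (fun t => g (T - t) * w t) volume 0 T :=
    (hgc.continuousOn.mul hw).intervalIntegrable_of_Icc hT.le
  have hsplit : w T = (∫ t in 0..T, g (T - t) * w t) - ∫ t in 0..T, g (T - t) * (w t - w T) := by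
    rw [← intervalIntegral.integral_sub hintw]
    · simp [mul_sub, intervalIntegral.integral_mul_const, hone]
    · simpa only [mul_sub] using hintw.sub (hint.mul_const _)
  have hnear : |∫ t in 0..T, g (T - t) * (w t - w T)| ≤ η := by
    calc ‖∫ t in 0..T, g (T - t) * (w t - w T)‖ ≤ ∫ t in 0..T, g (T - t) * η :=
          intervalIntegral.norm_integral_le_of_norm_le hT.le (ae_of_all _ fun t ht => ?_)
            (hint.mul_const η)
      _ = η := by rw [intervalIntegral.integral_mul_const, hone, one_mul]
    rw [norm_mul, Real.norm_of_nonneg (hg.nonneg _)]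
    rcases lt_or_ge (T - t) (min d T) with hlt | hge
    · refine mul_le_mul_of_nonneg_left (hdw (x := t) ⟨ht.1.le, ht.2⟩ ?_).le (hg.nonneg _)
      rw [dist_comm, Real.dist_eq, abs_of_nonneg (by linarith [ht.2])]
      exact hlt.trans_le (min_le_left _ _)
    · simp [hgz _ hge]
  rw [hsplit]
  exact (abs_sub _ _).trans (add_le_add (hK g hg) hnear)

theorem boxKernel_eq {ε : ℝ} (hε : 0 < ε) (x₁ x : E3) (g : ℝ → ℝ) (t : ℝ) :
    boxKernel ε T x₁ g t x = ε ^ 2 * (softDist ε x₁ x)⁻¹ ^ 5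
      * (softDist ε x₁ x ^ 2 * deriv (deriv g) (T - t - softDist ε x₁ x)
        + 3 * softDist ε x₁ x * deriv g (T - t - softDist ε x₁ x)
        + 3 * g (T - t - softDist ε x₁ x)) := by
  have hρ := softDist_pos x₁ x hε
  simp only [boxKernel, retKernel]
  field_simp

variable {w : ℝ → E3 → ℝ} (hw : ContinuousOn (Function.uncurry w) (Icc 0 T ×ˢ univ)) (x₁ : E3)
include hw

theorem IsPulse.tendsto_integral_boxKernel_mul {g : ℝ → ℝ} (hg : IsPulse g) (hT : 0 ≤ T) :
    Tendsto (fun ε => ∫ t in 0..T, ∫ x, boxKernel ε T x₁ g t x * w t x) (𝓝[>] 0)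
      (𝓝 (∫ t in 0..T, g (T - t) * (3 * bubbleMass * w t x₁))) := by
  have hg0 := hg.contDiff.continuous
  have hg1 := hg.contDiff_deriv.continuous
  have hg2 : Continuous (deriv (deriv g)) := hg.contDiff_deriv.continuous_deriv_one
  have hlim := tendsto_integral_softDist_pow_five_mul x₁ (w := fun t x r => (r ^ 2 *
    deriv (deriv g) (T - t - r) + 3 * r * deriv g (T - t - r) + 3 * g (T - t - r)) * w t x)
    (ContinuousOn.mul (by fun_prop) (hw.comp (f := fun p : ℝ × E3 × ℝ => (p.1, p.2.1))
      (by fun_prop) fun p hp => ⟨hp.1, mem_univ _⟩))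
    (fun t x r hr => by
      have hr' := sub_nonpos.2 hr
      simp [hg.eq_zero_of_nonpos _ hr', hg.deriv_eq_zero_of_nonpos _ hr',
        hg.deriv_deriv_eq_zero_of_nonpos _ hr']) hT
  have hval (t : ℝ) : bubbleMass * (((0 : ℝ) ^ 2 * deriv (deriv g) (T - t - 0)
      + 3 * 0 * deriv g (T - t - 0) + 3 * g (T - t - 0)) * w t x₁)
      = g (T - t) * (3 * bubbleMass * w t x₁) := by
    rw [sub_zero]
    ring
  simp only [hval] at hlim
  refine hlim.congr' (eventually_mem_nhdsWithin.mono fun ε hε => ?_)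
  simp only [boxKernel_eq hε, mul_assoc]

theorem abs_le_of_forall_boxKernel (hT : 0 < T)
    (hK : ∀ g, IsPulse g → ∀ ε > 0, |∫ t in 0..T, ∫ x, boxKernel ε T x₁ g t x * w t x| ≤ K) :
    |w T x₁| ≤ (3 * bubbleMass)⁻¹ * K := by
  have hpos := bubbleMass_pos
  have hw₁ : ContinuousOn (fun t => 3 * bubbleMass * w t x₁) (Icc 0 T) :=
    continuousOn_const.mul (hw.comp (f := fun t => (t, x₁)) (by fun_prop)
      fun t ht => ⟨ht, mem_univ _⟩)
  have hle : |3 * bubbleMass * w T x₁| ≤ K := abs_le_of_forall_isPulse hT hw₁ fun g hg =>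
    le_of_tendsto (hg.tendsto_integral_boxKernel_mul hw x₁ hT.le).abs
      (eventually_mem_nhdsWithin.mono (hK g hg))
  rwa [abs_mul, abs_of_pos (by positivity), ← le_inv_mul_iff₀ (by positivity)] at hle

end PointwiseRecovery

section GlasseyStrauss

/-- The weight `(α(ξ) + β(ξ) · ω) / (1 + v(ξ) · ω)` of Glassey and Strauss, as a function of
`(ω, ξ)`. -/
def glasseyStraussWeight (α : E3 → ℝ) (β : E3 → E3) (q : E3 × E3) : ℝ :=
  (α q.2 + ⟪β q.2, q.1⟫) / (1 + ⟪vrel q.2, q.1⟫)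

theorem abs_inner_vrel_lt_one {ω : E3} (hω : ‖ω‖ ≤ 1) (ξ : E3) : |⟪vrel ξ, ω⟫| < 1 :=
  ((abs_real_inner_le_norm _ _).trans (mul_le_of_le_one_right (norm_nonneg _) hω)).trans_lt
    (norm_vrel_lt_one ξ)

theorem one_add_inner_vrel_pos {ω : E3} (hω : ‖ω‖ ≤ 1) (ξ : E3) : 0 < 1 + ⟪vrel ξ, ω⟫ := by
  linarith [neg_lt_of_abs_lt (abs_inner_vrel_lt_one hω ξ)]

variable {α : E3 → ℝ} {β : E3 → E3}

theorem contDiffAt_glasseyStraussWeight (hα : ContDiff ℝ 1 α) (hβ : ContDiff ℝ 1 β) {q : E3 × E3}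
    (hq : ‖q.1‖ ≤ 1) : ContDiffAt ℝ 1 (glasseyStraussWeight α β) q :=
  (((hα.comp contDiff_snd).add ((hβ.comp contDiff_snd).inner ℝ contDiff_fst)).contDiffAt).div
    (contDiff_const.add ((contDiff_vrel.comp contDiff_snd).inner ℝ contDiff_fst)).contDiffAt
    (one_add_inner_vrel_pos hq q.2).ne'

theorem exists_glasseyStraussWeight_bound (hα : ContDiff ℝ 1 α) (hβ : ContDiff ℝ 1 β) (r : ℝ) :
    ∃ C, 0 ≤ C ∧ ∀ ω ξ, ‖ω‖ ≤ 1 → ‖ξ‖ ≤ r → |glasseyStraussWeight α β (ω, ξ)| ≤ C ∧ ‖β ξ‖ ≤ C ∧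
      ‖fderiv ℝ (glasseyStraussWeight α β) (ω, ξ)‖ ≤ C := by
  have hK := (isCompact_closedBall (0 : E3) 1).prod (isCompact_closedBall (0 : E3) r)
  have hsmooth (q) (hq : q ∈ closedBall (0 : E3) 1 ×ˢ closedBall (0 : E3) r) :
      ContDiffAt ℝ 1 (glasseyStraussWeight α β) q :=
    contDiffAt_glasseyStraussWeight hα hβ (mem_closedBall_zero_iff.1 hq.1)
  obtain ⟨C₁, h₁⟩ := hK.exists_bound_of_continuousOn (f := glasseyStraussWeight α β)
    fun q hq => (hsmooth q hq).continuousAt.continuousWithinAt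
  obtain ⟨C₂, h₂⟩ := (isCompact_closedBall (0 : E3) r).exists_bound_of_continuousOn
    hβ.continuous.continuousOn
  obtain ⟨C₃, h₃⟩ := hK.exists_bound_of_continuousOn (f := fderiv ℝ (glasseyStraussWeight α β))
    fun q hq => ((hsmooth q hq).fderiv_right (m := 0) le_rfl).continuousAt.continuousWithinAt
  refine ⟨max 0 (max C₁ (max C₂ C₃)), le_max_left _ _, fun ω ξ hω hξ => ?_⟩
  have hξ' := mem_closedBall_zero_iff.2 hξ
  have hq := mk_mem_prod (mem_closedBall_zero_iff.2 hω) hξ'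
  exact ⟨(h₁ _ hq).trans (by simp), (h₂ ξ hξ').trans (by simp), (h₃ _ hq).trans (by simp)⟩

/-- The test function for the transport equation matching the test fields `retKernel ε T x₁ g` for
Maxwell's equations. -/
def kineticKernel (α : E3 → ℝ) (β : E3 → E3) (ε T : ℝ) (x₁ : E3) (g : ℝ → ℝ) (p : ℝ × E3 × E3) :
    ℝ :=
  glasseyStraussWeight α β (softDir ε x₁ p.2.1, p.2.2) * retKernel ε T x₁ g p.1 p.2.1

variable {ε : ℝ} {g : ℝ → ℝ} (T : ℝ) (x₁ : E3)

theorem contDiff_kineticKernel (hα : ContDiff ℝ 1 α) (hβ : ContDiff ℝ 1 β) (hε : 0 < ε)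
    (hg : ContDiff ℝ 1 g) : ContDiff ℝ 1 (kineticKernel α β ε T x₁ g) := by
  have hdir : ContDiff ℝ 1 fun p : ℝ × E3 × E3 => (softDir ε x₁ p.2.1, p.2.2) :=
    ((contDiff_softDir x₁ hε).comp (contDiff_fst.comp contDiff_snd)).prodMk
      (contDiff_snd.comp contDiff_snd)
  have hker : ContDiff ℝ 1 fun p : ℝ × E3 × E3 => retKernel ε T x₁ g p.1 p.2.1 :=
    (contDiff_retKernel T x₁ hε hg).comp (contDiff_fst.prodMk (contDiff_fst.comp contDiff_snd))
  refine ContDiff.mul (contDiff_iff_contDiffAt.2 fun p => ?_) hker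
  exact ContDiffAt.comp (g := glasseyStraussWeight α β) p (contDiffAt_glasseyStraussWeight hα hβ
    (norm_softDir_le_one x₁ p.2.1 hε)) hdir.contDiffAt

theorem fderiv_uncurry_retKernel (hε : 0 < ε) (hg : ContDiff ℝ 1 g) (t : ℝ) (x v : E3) :
    fderiv ℝ (Function.uncurry (retKernel ε T x₁ g)) (t, x) (1, v)
      = -retKernel ε T x₁ (deriv g) t x + ⟪gradient (retKernel ε T x₁ g t) x, v⟫ := by
  have hd := (contDiff_retKernel T x₁ hε hg).differentiable one_ne_zero (t, x)
  have htime : fderiv ℝ (Function.uncurry (retKernel ε T x₁ g)) (t, x) (1, 0)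
      = -retKernel ε T x₁ (deriv g) t x :=
    (hd.hasFDerivAt.comp_hasDerivAt (f := fun s => (s, x)) t
      ((hasDerivAt_id t).prodMk (hasDerivAt_const t x))).unique
      (hasDerivAt_retKernel T x₁ ε (hg.differentiable one_ne_zero) t x)
  have hspace : fderiv ℝ (retKernel ε T x₁ g t) x
      = (fderiv ℝ (Function.uncurry (retKernel ε T x₁ g)) (t, x)).comp (.inr ℝ ℝ E3) :=
    HasFDerivAt.fderiv (f := retKernel ε T x₁ g t)
      (hd.hasFDerivAt.comp (f := fun y => (t, y)) x (hasFDerivAt_prodMk_right t x))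
  rw [inner_gradient_left, hspace, ← htime, ContinuousLinearMap.comp_apply,
    ContinuousLinearMap.inr_apply, ← map_add]
  simp

theorem fderiv_kineticKernel (hα : ContDiff ℝ 1 α) (hβ : ContDiff ℝ 1 β) (hε : 0 < ε)
    (hg : ContDiff ℝ 1 g) (t : ℝ) (x ξ v η : E3) :
    fderiv ℝ (kineticKernel α β ε T x₁ g) (t, x, ξ) (1, v, η)
      = glasseyStraussWeight α β (softDir ε x₁ x, ξ)
          * (-retKernel ε T x₁ (deriv g) t x + ⟪gradient (retKernel ε T x₁ g t) x, v⟫)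
        + retKernel ε T x₁ g t x * fderiv ℝ (glasseyStraussWeight α β) (softDir ε x₁ x, ξ)
          (fderiv ℝ (softDir ε x₁) x v, η) := by
  have hx : HasDerivAt (fun s : ℝ => x + s • v) v 0 := by
    simpa using ((hasDerivAt_id (0 : ℝ)).smul_const v).const_add x
  have hξ : HasDerivAt (fun s : ℝ => ξ + s • η) η 0 := by
    simpa using ((hasDerivAt_id (0 : ℝ)).smul_const η).const_add ξ
  have ht : HasDerivAt (fun s : ℝ => t + s) 1 0 := (hasDerivAt_id 0).const_add t
  have hker : HasDerivAt (fun s : ℝ => retKernel ε T x₁ g (t + s) (x + s • v))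
      (-retKernel ε T x₁ (deriv g) t x + ⟪gradient (retKernel ε T x₁ g t) x, v⟫) 0 := by
    rw [← fderiv_uncurry_retKernel T x₁ hε hg]
    have hd := (contDiff_retKernel T x₁ hε hg).differentiable one_ne_zero (t, x)
    exact hd.hasFDerivAt.comp_hasDerivAt_of_eq (f := fun s => (t + s, x + s • v)) 0
      (ht.prodMk hx) (by simp)
  have hdir : HasDerivAt (fun s : ℝ => softDir ε x₁ (x + s • v)) (fderiv ℝ (softDir ε x₁) x v) 0 :=
    have hd := (contDiff_softDir (n := 1) x₁ hε).differentiable one_ne_zero x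
    hd.hasFDerivAt.comp_hasDerivAt_of_eq (f := fun s => x + s • v) 0 hx (by simp)
  have hwt : HasDerivAt
      (fun s : ℝ => glasseyStraussWeight α β (softDir ε x₁ (x + s • v), ξ + s • η))
      (fderiv ℝ (glasseyStraussWeight α β) (softDir ε x₁ x, ξ)
        (fderiv ℝ (softDir ε x₁) x v, η)) 0 := by
    have hd := (contDiffAt_glasseyStraussWeight hα hβ (q := (softDir ε x₁ x, ξ))
      (norm_softDir_le_one x₁ x hε)).differentiableAt one_ne_zero
    exact hd.hasFDerivAt.comp_hasDerivAt_of_eq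
      (f := fun s => (softDir ε x₁ (x + s • v), ξ + s • η)) 0 (hdir.prodMk hξ) (by simp)
  have hd := (contDiff_kineticKernel T x₁ hα hβ hε hg).differentiable one_ne_zero (t, x, ξ)
  have hline := hd.hasFDerivAt.comp_hasDerivAt_of_eq
    (f := fun s : ℝ => (t + s, x + s • v, ξ + s • η)) 0 (ht.prodMk (hx.prodMk hξ)) (by simp)
  rw [hline.unique (hwt.fun_mul hker)]
  simp only [zero_smul, add_zero]
  ring

/-- The weight is chosen to cancel the derivatives of `g`: only the zeroth order terms in which
`softDir` or the weight are differentiated survive. -/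
theorem fderiv_kineticKernel_sub (hα : ContDiff ℝ 1 α) (hβ : ContDiff ℝ 1 β) (hε : 0 < ε)
    (hg : ContDiff ℝ 1 g) (t : ℝ) (x ξ η : E3) :
    fderiv ℝ (kineticKernel α β ε T x₁ g) (t, x, ξ) (1, vrel ξ, η)
        - (α ξ * -retKernel ε T x₁ (deriv g) t x + ⟪gradient (retKernel ε T x₁ g t) x, β ξ⟫)
      = retKernel ε T x₁ g t x * ((softDist ε x₁ x)⁻¹ * (⟪β ξ, softDir ε x₁ x⟫
          - glasseyStraussWeight α β (softDir ε x₁ x, ξ) * ⟪vrel ξ, softDir ε x₁ x⟫)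
        + fderiv ℝ (glasseyStraussWeight α β) (softDir ε x₁ x, ξ)
          (fderiv ℝ (softDir ε x₁) x (vrel ξ), η)) := by
  have hweight : glasseyStraussWeight α β (softDir ε x₁ x, ξ) * (1 + ⟪vrel ξ, softDir ε x₁ x⟫)
      = α ξ + ⟪β ξ, softDir ε x₁ x⟫ :=
    div_mul_cancel₀ _ (one_add_inner_vrel_pos (norm_softDir_le_one x₁ x hε) ξ).ne'
  rw [fderiv_kineticKernel T x₁ hα hβ hε hg,
    gradient_retKernel T x₁ hε (hg.differentiable one_ne_zero), inner_smul_left, inner_smul_left,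
    real_inner_comm (vrel ξ), real_inner_comm (β ξ)]
  simp only [conj_trivial]
  linear_combination -retKernel ε T x₁ (deriv g) t x * hweight

theorem exists_kineticKernel_bound (hα : ContDiff ℝ 1 α) (hβ : ContDiff ℝ 1 β) (r : ℝ) :
    ∃ C, 0 ≤ C ∧ ∀ ε > 0, ∀ T x₁ g, ContDiff ℝ 1 g → (∀ s, 0 ≤ g s) → ∀ t x ξ, ‖ξ‖ ≤ r →
      |kineticKernel α β ε T x₁ g (t, x, ξ)| ≤ C * retKernel ε T x₁ g t x ∧
      ∀ η, |fderiv ℝ (kineticKernel α β ε T x₁ g) (t, x, ξ) (1, vrel ξ, η)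
          - (α ξ * -retKernel ε T x₁ (deriv g) t x + ⟪gradient (retKernel ε T x₁ g t) x, β ξ⟫)|
        ≤ C * (retKernel ε T x₁ g t x * ((softDist ε x₁ x)⁻¹ + ‖η‖)) := by
  obtain ⟨C, hC, hbound⟩ := exists_glasseyStraussWeight_bound hα hβ r
  refine ⟨4 * C, by positivity, fun ε hε T x₁ g hg hg₀ t x ξ hξ => ?_⟩
  have hω := norm_softDir_le_one x₁ x hε
  obtain ⟨ha, hβC, hDa⟩ := hbound _ ξ hω hξ
  have hK := retKernel_nonneg T x₁ hε hg₀ t x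
  have hρ := inv_nonneg.2 (softDist_pos x₁ x hε).le
  refine ⟨?_, fun η => ?_⟩
  · rw [kineticKernel, abs_mul, abs_of_nonneg hK]
    exact mul_le_mul_of_nonneg_right (ha.trans (by linarith)) hK
  have hinner : |⟪β ξ, softDir ε x₁ x⟫ - glasseyStraussWeight α β (softDir ε x₁ x, ξ)
      * ⟪vrel ξ, softDir ε x₁ x⟫| ≤ C + C * 1 :=
    (abs_sub _ _).trans (add_le_add ((abs_real_inner_le_norm _ _).trans
      ((mul_le_of_le_one_right (norm_nonneg _) hω).trans hβC)) (by
        rw [abs_mul]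
        exact mul_le_mul ha (abs_inner_vrel_lt_one hω ξ).le (abs_nonneg _) hC))
  have hdir : ‖fderiv ℝ (softDir ε x₁) x (vrel ξ)‖ ≤ 2 * (softDist ε x₁ x)⁻¹ :=
    (norm_fderiv_softDir_le x₁ x hε _).trans
      (mul_le_of_le_one_right (by positivity) (norm_vrel_lt_one ξ).le)
  have hvec : ‖(fderiv ℝ (softDir ε x₁) x (vrel ξ), η)‖ ≤ 2 * (softDist ε x₁ x)⁻¹ + ‖η‖ :=
    (max_le_add_of_nonneg (norm_nonneg _) (norm_nonneg _)).trans (by gcongr)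
  rw [fderiv_kineticKernel_sub T x₁ hα hβ hε hg, abs_mul, abs_of_nonneg hK, mul_left_comm]
  refine mul_le_mul_of_nonneg_left ?_ hK
  calc _ ≤ (softDist ε x₁ x)⁻¹ * (C + C * 1) + C * (2 * (softDist ε x₁ x)⁻¹ + ‖η‖) := by
        refine (abs_add_le _ _).trans (add_le_add ?_ ?_)
        · rw [abs_mul, abs_of_nonneg hρ]
          exact mul_le_mul_of_nonneg_left hinner hρ
        · exact (ContinuousLinearMap.le_opNorm _ _).trans
            (mul_le_mul hDa hvec (norm_nonneg _) hC)
    _ ≤ 4 * C * ((softDist ε x₁ x)⁻¹ + ‖η‖) := by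
        linarith [mul_nonneg hC (norm_nonneg η)]

end GlasseyStrauss

section MomentIntegrals

theorem abs_integral_prod_mul_le {X Y : Type*} [MeasurableSpace X] [MeasurableSpace Y]
    {μ : Measure X} {ν : Measure Y} [SFinite μ] [SFinite ν] {S : Set Y} (hS : MeasurableSet S)
    (hν : ν S ≠ ∞) {u R : X × Y → ℝ} {κ : X → ℝ} {M : ℝ} (hκ : Integrable κ μ)
    (hM : ∀ p, |u p| ≤ M) (hu : ∀ p, p.2 ∉ S → u p = 0) (hR : ∀ p, p.2 ∈ S → |R p| ≤ κ p.1) :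
    |∫ p, u p * R p ∂μ.prod ν| ≤ M * ν.real S * ∫ x, κ x ∂μ := by
  have hind : Integrable (S.indicator fun _ => M) ν := (integrable_indicator_iff hS).2
    (integrableOn_const hν)
  calc ‖∫ p, u p * R p ∂μ.prod ν‖
    _ ≤ ∫ p, κ p.1 * S.indicator (fun _ => M) p.2 ∂μ.prod ν := by
        refine norm_integral_le_of_norm_le (hκ.mul_prod hind) (.of_forall fun p => ?_)
        rw [norm_mul, Real.norm_eq_abs, Real.norm_eq_abs]
        by_cases hp : p.2 ∈ S
        · rw [indicator_of_mem hp, mul_comm (κ p.1)]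
          exact mul_le_mul (hM p) (hR p hp) (abs_nonneg _) ((abs_nonneg _).trans (hM p))
        · simp [hu p hp, hp]
    _ = M * ν.real S * ∫ x, κ x ∂μ := by
        rw [integral_prod_mul, integral_indicator_const _ hS, smul_eq_mul]
        ring

theorem integrable_and_integral_mul_add_inner_eq {u : E3 × E3 → ℝ} {α ψ : E3 → ℝ} {β G : E3 → E3}
    {K L : Set E3} (hu : Continuous u) (hα : Continuous α) (hβ : Continuous β) (hψ : Continuous ψ)
    (hG : Continuous G) (hK : IsCompact K) (hL : IsCompact L) (huL : ∀ p, p.2 ∉ L → u p = 0)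
    (hψK : ∀ x, x ∉ K → ψ x = 0) (hGK : ∀ x, x ∉ K → G x = 0) :
    Integrable (fun p => u p * (α p.2 * ψ p.1 + ⟪G p.1, β p.2⟫)) ∧
      Integrable (fun x => ψ x * (∫ ξ, u (x, ξ) * α ξ) + ⟪G x, ∫ ξ, u (x, ξ) • β ξ⟫) ∧
      ∫ x, (ψ x * (∫ ξ, u (x, ξ) * α ξ) + ⟪G x, ∫ ξ, u (x, ξ) • β ξ⟫)
        = ∫ p, u p * (α p.2 * ψ p.1 + ⟪G p.1, β p.2⟫) := by
  have hint : Integrable (fun p => u p * (α p.2 * ψ p.1 + ⟪G p.1, β p.2⟫)) := by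
    refine Continuous.integrable_of_hasCompactSupport (by fun_prop)
      (.intro (hK.prod hL) fun p hp => ?_)
    by_cases hx : p.1 ∈ K
    · rw [huL p (by simpa [hx] using hp), zero_mul]
    · simp only [hψK p.1 hx, hGK p.1 hx, inner_zero_left, mul_zero, add_zero]
  have hslice (x : E3) : ψ x * (∫ ξ, u (x, ξ) * α ξ) + ⟪G x, ∫ ξ, u (x, ξ) • β ξ⟫
      = ∫ ξ, u (x, ξ) * (α ξ * ψ x + ⟪G x, β ξ⟫) := by
    have h₁ : Integrable fun ξ => u (x, ξ) * α ξ :=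
      Continuous.integrable_of_hasCompactSupport (by fun_prop) (.intro hL fun ξ hξ => by
        rw [huL (x, ξ) hξ, zero_mul])
    have h₂ : Integrable fun ξ => u (x, ξ) • β ξ :=
      Continuous.integrable_of_hasCompactSupport (by fun_prop) (.intro hL fun ξ hξ => by
        rw [huL (x, ξ) hξ, zero_smul])
    rw [← integral_const_mul, ← integral_inner h₂, ← integral_add (h₁.const_mul _)
      (h₂.const_inner _)]
    congr 1 with ξ
    rw [inner_smul_right]
    ring
  simp only [hslice]
  exact ⟨hint, hint.integral_prod_left, (integral_prod _ hint).symm⟩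

end MomentIntegrals

section PulseKernel

variable {ε : ℝ} {g : ℝ → ℝ} {T t : ℝ} {x₁ x : E3}

theorem IsPulse.retKernel_deriv_eq_zero (hg : IsPulse g) (hε : 0 < ε) (h : T - t ≤ ‖x - x₁‖) :
    retKernel ε T x₁ (deriv g) t x = 0 :=
  retKernel_eq_zero T x₁ hε (fun s hs => hg.deriv_eq_zero_of_nonpos s hs.le) h

theorem IsPulse.gradient_retKernel_eq_zero (hg : IsPulse g) (hε : 0 < ε) (h : T - t ≤ ‖x - x₁‖) :
    gradient (retKernel ε T x₁ g t) x = 0 := by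
  rw [gradient_retKernel T x₁ hε hg.differentiable, hg.retKernel_deriv_eq_zero hε h,
    retKernel_eq_zero T x₁ hε (fun s hs => hg.eq_zero_of_nonpos s hs.le) h, mul_zero, add_zero,
    neg_zero, zero_smul]

theorem IsPulse.boxKernel_eq_zero (hg : IsPulse g) (hε : 0 < ε) (h : T - t ≤ ‖x - x₁‖) :
    boxKernel ε T x₁ g t x = 0 := by
  rw [boxKernel, hg.retKernel_deriv_eq_zero hε h,
    retKernel_eq_zero T x₁ hε (fun s hs => hg.eq_zero_of_nonpos s hs.le) h,
    retKernel_eq_zero T x₁ hε (fun s hs => hg.deriv_deriv_eq_zero_of_nonpos s hs.le) h]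
  simp only [mul_zero, add_zero]

theorem IsPulse.continuous_boxKernel (hg : IsPulse g) (hε : 0 < ε) (T : ℝ) (x₁ : E3) :
    Continuous (Function.uncurry (boxKernel ε T x₁ g)) := by
  have hρ : Continuous fun p : ℝ × E3 => (softDist ε x₁ p.2)⁻¹ :=
    ((contDiff_softDist (n := 0) x₁ hε).continuous.comp continuous_snd).inv₀
      fun p => (softDist_pos x₁ p.2 hε).ne'
  have hK {h : ℝ → ℝ} (hh : Continuous h) :
      Continuous fun p : ℝ × E3 => retKernel ε T x₁ h p.1 p.2 :=
    (contDiff_retKernel T x₁ hε (contDiff_zero.2 hh)).continuous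
  have h₀ := hK hg.contDiff.continuous
  have h₁ := hK hg.contDiff_deriv.continuous
  have h₂ := hK hg.contDiff_deriv.continuous_deriv_one
  simp only [Function.uncurry_def, boxKernel]
  fun_prop

end PulseKernel

section ComponentEstimate

/-- The setting in which the component `⟪E, e⟫` is estimated: the sources of a Maxwell solution are
the moments of a bounded transported density `u` against `α` and `β`, and `D` bounds the initial
data. -/
structure IsCoupled (τ r M D : ℝ) (e : E3) (α : E3 → ℝ) (β : E3 → E3) (E B j m : ℝ → E3 → E3)
    (ρ : ℝ → E3 → ℝ) (F : ℝ → E3 → E3 → E3) (u : ℝ → E3 → E3 → ℝ) : Prop where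
  maxwell : IsMaxwellSolution τ E B j m ρ
  transported : IsTransported τ r F u
  abs_density_le : ∀ t ∈ Ico 0 τ, ∀ x ξ, |u t x ξ| ≤ M
  contDiff_weight : ContDiff ℝ 1 α
  contDiff_vectorWeight : ContDiff ℝ 1 β
  current : ∀ t ∈ Ioo 0 τ, ∀ x, ⟪j t x, e⟫ = ∫ ξ, u t x ξ * α ξ
  charge : ∀ t ∈ Ioo 0 τ, ∀ x, ρ t x • e - cross3 e (m t x) = ∫ ξ, u t x ξ • β ξ
  contDiff_initial : ContDiff ℝ 2 (E 0)
  abs_initial_le : ∀ x, |⟪E 0 x, e⟫| ≤ D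
  abs_curl3_initial_le : ∀ x, |⟪curl3 (B 0) x, e⟫| ≤ D
  abs_laplacian_initial_le : ∀ x, |divg (gradient fun y => ⟪E 0 y, e⟫) x| ≤ D

/-- The pairing of the fields and of the density with the test functions of apex `(T, x₁)`. It
vanishes at `t = T`, and in its time derivative all derivatives have been moved onto `E 0` and the
test functions. -/
def dualPairing (α : E3 → ℝ) (β : E3 → E3) (e : E3) (E B : ℝ → E3 → E3) (u : ℝ → E3 → E3 → ℝ)
    (ε T : ℝ) (x₁ : E3) (g : ℝ → ℝ) (t : ℝ) : ℝ :=
  (∫ x, (-retKernel ε T x₁ (deriv g) t x * ⟪E t x - E 0 x, e⟫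
    - ⟪B t x, cross3 (gradient (retKernel ε T x₁ g t) x) e⟫))
  + ∫ p : E3 × E3, u t p.1 p.2 * kineticKernel α β ε T x₁ g (t, p)

/-- The part of the derivative of `dualPairing` that is not concentrated at `x₁`. -/
def dualRemainder (α : E3 → ℝ) (β : E3 → E3) (e : E3) (E : ℝ → E3 → E3) (F : ℝ → E3 → E3 → E3)
    (u : ℝ → E3 → E3 → ℝ) (ε T : ℝ) (x₁ : E3) (g : ℝ → ℝ) (t : ℝ) : ℝ :=
  (∫ p : E3 × E3, u t p.1 p.2
    * (fderiv ℝ (kineticKernel α β ε T x₁ g) (t, p) (1, vrel p.2, F t p.1 p.2)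
      - (α p.2 * -retKernel ε T x₁ (deriv g) t p.1
        + ⟪gradient (retKernel ε T x₁ g t) p.1, β p.2⟫)))
  - ∫ x, retKernel ε T x₁ g t x * divg (gradient fun y => ⟪E 0 y, e⟫) x

variable {τ r M D : ℝ} {e : E3} {α : E3 → ℝ} {β : E3 → E3} {E B j m : ℝ → E3 → E3}
  {ρ : ℝ → E3 → ℝ} {F : ℝ → E3 → E3 → E3} {u : ℝ → E3 → E3 → ℝ} {ε T : ℝ} {g : ℝ → ℝ}

theorem IsTransported.continuous_slice (hu : IsTransported τ r F u) {t : ℝ} (ht : t ∈ Ico 0 τ) :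
    Continuous fun p : E3 × E3 => u t p.1 p.2 :=
  hu.contDiffOn.continuousOn.comp_continuous (f := fun p : E3 × E3 => (t, p)) (by fun_prop)
    fun _ => ⟨ht, mem_univ _⟩

theorem dualPairing_self (hg : IsPulse g) (hε : 0 < ε) (x₁ : E3) :
    dualPairing α β e E B u ε T x₁ g T = 0 := by
  have h (x : E3) : T - T ≤ ‖x - x₁‖ := by simp
  simp only [dualPairing, kineticKernel, hg.retKernel_deriv_eq_zero hε (h _),
    hg.gradient_retKernel_eq_zero hε (h _),
    retKernel_eq_zero T x₁ hε (fun s hs => hg.eq_zero_of_nonpos s hs.le) (h _), cross3_zero_left,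
    inner_zero_right, neg_zero, zero_mul, mul_zero, sub_zero, integral_zero, add_zero]

namespace IsCoupled

variable (h : IsCoupled τ r M D e α β E B j m ρ F u)
include h

theorem integrable_density_mul_fderiv_kineticKernel (hg : IsPulse g) (hε : 0 < ε) (T : ℝ) (x₁ : E3)
    {t : ℝ} (ht : t ∈ Ioo 0 τ) : Integrable fun p : E3 × E3 => u t p.1 p.2
      * fderiv ℝ (kineticKernel α β ε T x₁ g) (t, p) (1, vrel p.2, F t p.1 p.2) := by
  have hg₁ := hg.contDiff.of_le one_le_two
  have hW := contDiff_kineticKernel T x₁ h.contDiff_weight h.contDiff_vectorWeight hε hg₁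
  have hDW : Continuous fun p : E3 × E3 => fderiv ℝ (kineticKernel α β ε T x₁ g) (t, p) :=
    (hW.continuous_fderiv one_ne_zero).comp (Continuous.prodMk_right t)
  refine Continuous.integrable_of_hasCompactSupport
    ((h.transported.continuous_slice (Ioo_subset_Ico_self ht)).mul (hDW.clm_apply
      (continuous_const.prodMk (((contDiff_vrel (n := 0)).continuous.comp continuous_snd).prodMk
        (h.transported.continuous_force t ht)))))
    (.intro ((isCompact_closedBall x₁ (T - t)).prod (isCompact_closedBall (0 : E3) r))
      fun p hp => ?_)
  by_cases hx : p.1 ∈ closedBall x₁ (T - t)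
  · rw [h.transported.eq_zero_of_lt_norm t (Ioo_subset_Ico_self ht) _ _ (by simpa [hx] using hp),
      zero_mul]
  · have hx' : T - t ≤ ‖p.1 - x₁‖ := le_of_not_ge (mt mem_closedBall_iff_norm.2 hx)
    rw [fderiv_kineticKernel T x₁ h.contDiff_weight h.contDiff_vectorWeight hε hg₁ t p.1 p.2,
      hg.retKernel_eq_zero_of_notMem T t x₁ hε hx, hg.retKernel_deriv_eq_zero hε hx',
      hg.gradient_retKernel_eq_zero hε hx']
    simp only [inner_zero_left, neg_zero, add_zero, mul_zero, zero_mul]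

/-- The currents produced by Maxwell's equations cancel against the transport of the density. -/
theorem integral_add_integral_eq_dualRemainder (hg : IsPulse g) (hε : 0 < ε) (T : ℝ) (x₁ : E3)
    {t : ℝ} (ht : t ∈ Ioo 0 τ) :
    (∫ x, ((retKernel ε T x₁ (deriv (deriv g)) t x - divg (gradient (retKernel ε T x₁ g t)) x)
          * ⟪E t x - E 0 x, e⟫
        - retKernel ε T x₁ g t x * divg (gradient fun y => ⟪E 0 y, e⟫) x
        - (-retKernel ε T x₁ (deriv g) t x * ⟪j t x, e⟫
          + ⟪gradient (retKernel ε T x₁ g t) x, ρ t x • e - cross3 e (m t x)⟫)))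
      + (∫ p : E3 × E3, u t p.1 p.2
        * fderiv ℝ (kineticKernel α β ε T x₁ g) (t, p) (1, vrel p.2, F t p.1 p.2))
      = (∫ x, boxKernel ε T x₁ g t x * ⟪E t x - E 0 x, e⟫)
        + dualRemainder α β e E F u ε T x₁ g t := by
  have ht' := Ioo_subset_Ico_self ht
  have hK := isCompact_closedBall x₁ (T - t)
  have hcone {x : E3} (hx : x ∉ closedBall x₁ (T - t)) : T - t ≤ ‖x - x₁‖ :=
    le_of_not_ge (mt mem_closedBall_iff_norm.2 hx)
  have hψ : Continuous (retKernel ε T x₁ (deriv g) t) :=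
    (contDiff_slice (contDiff_retKernel T x₁ hε hg.contDiff_deriv) t).continuous
  have hG : Continuous (gradient (retKernel ε T x₁ g t)) :=
    (contDiff_gradient (n := 1) (contDiff_slice
      (contDiff_retKernel T x₁ hε hg.contDiff) t)).continuous
  obtain ⟨hsource, hmoments, hmoments_eq⟩ := integrable_and_integral_mul_add_inner_eq
    (h.transported.continuous_slice ht') h.contDiff_weight.continuous
    h.contDiff_vectorWeight.continuous hψ.neg hG hK (isCompact_closedBall 0 r)
    (fun p hp => h.transported.eq_zero_of_lt_norm t ht' _ _ (by simpa using hp))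
    (fun x hx => by simp [hg.retKernel_deriv_eq_zero hε (hcone hx)])
    (fun x hx => hg.gradient_retKernel_eq_zero hε (hcone hx))
  have hbox : Integrable fun x => boxKernel ε T x₁ g t x * ⟪E t x - E 0 x, e⟫ :=
    Continuous.integrable_of_hasCompactSupport
      (((hg.continuous_boxKernel hε T x₁).comp (Continuous.prodMk_right t)).mul
        (((h.maxwell.contDiff_electric ht').continuous.sub
          h.contDiff_initial.continuous).inner continuous_const))
      (.intro hK fun x hx => by rw [hg.boxKernel_eq_zero hε (hcone hx), zero_mul])
  have hlaplacian : Integrable fun x =>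
      retKernel ε T x₁ g t x * divg (gradient fun y => ⟪E 0 y, e⟫) x :=
    Continuous.integrable_of_hasCompactSupport
      ((hg.continuous_retKernel_slice T t x₁ hε).mul
        (continuous_divg (contDiff_gradient (h.contDiff_initial.inner ℝ contDiff_const))))
      (.intro hK fun x hx => by rw [hg.retKernel_eq_zero_of_notMem T t x₁ hε hx, zero_mul])
  simp only [h.current t ht, h.charge t ht, divg_gradient_retKernel T x₁ hε hg.contDiff,
    sub_sub_cancel, dualRemainder]
  simp only [Pi.neg_apply] at hsource hmoments hmoments_eq
  simp only [mul_sub] at hsource ⊢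
  rw [integral_sub (f := fun x => _ - _) (hbox.sub hlaplacian) hmoments,
    integral_sub hbox hlaplacian, hmoments_eq,
    integral_sub (h.integrable_density_mul_fderiv_kineticKernel hg hε T x₁ ht) hsource]
  ring

theorem hasDerivAt_dualPairing (hg : IsPulse g) (hε : 0 < ε) (x₁ : E3) {t : ℝ} (ht : t ∈ Ioo 0 τ) :
    HasDerivAt (dualPairing α β e E B u ε T x₁ g)
      ((∫ x, boxKernel ε T x₁ g t x * ⟪E t x - E 0 x, e⟫)
        + dualRemainder α β e E F u ε T x₁ g t) t := by
  have hcone {s : ℝ} (hs : s ∈ Ioo 0 τ) {x : E3} (hx : x ∉ closedBall x₁ T) :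
      T - s ≤ ‖x - x₁‖ :=
    (sub_le_self T hs.1.le).trans (le_of_not_ge (mt mem_closedBall_iff_norm.2 hx))
  have hφK : ∀ s ∈ Ioo 0 τ, ∀ x, x ∉ closedBall x₁ T → retKernel ε T x₁ g s x = 0 :=
    fun s hs x hx =>
      retKernel_eq_zero T x₁ hε (fun s hs => hg.eq_zero_of_nonpos s hs.le) (hcone hs hx)
  have hψK : ∀ s ∈ Ioo 0 τ, ∀ x, x ∉ closedBall x₁ T → -retKernel ε T x₁ (deriv g) s x = 0 :=
    fun s hs x hx => by rw [hg.retKernel_deriv_eq_zero hε (hcone hs hx), neg_zero]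
  have hK := isCompact_closedBall x₁ T
  have hφ := contDiff_retKernel T x₁ hε hg.contDiff
  have hψ := (contDiff_retKernel T x₁ hε hg.contDiff_deriv).neg
  have hW := contDiff_kineticKernel T x₁ h.contDiff_weight h.contDiff_vectorWeight hε
    (hg.contDiff.of_le one_le_two)
  have hMaxwell := h.maxwell.hasDerivAt_integral (ψ := fun s x => -retKernel ε T x₁ (deriv g) s x)
    (χ := retKernel ε T x₁ (deriv (deriv g))) h.contDiff_initial hφ hψ
    (hasDerivAt_retKernel T x₁ ε hg.differentiable)
    (fun s x => by
      simpa using (hasDerivAt_retKernel T x₁ ε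
        (hg.contDiff_deriv.differentiable one_ne_zero) s x).fun_neg) hK hφK hψK e ht
  have hWK : ∀ s ∈ Ioo 0 τ, ∀ x, x ∉ closedBall x₁ T → ∀ ξ,
      kineticKernel α β ε T x₁ g (s, x, ξ) = 0 := fun s hs x hx ξ => by
    rw [kineticKernel, hφK s hs x hx, mul_zero]
  have hKinetic := h.transported.hasDerivAt_integral_mul hW hK hWK ht
  exact (hMaxwell.add hKinetic).congr_deriv
    (h.integral_add_integral_eq_dualRemainder hg hε T x₁ ht)

end IsCoupled

end ComponentEstimate

section ComponentBound

theorem IsPulse.integrable_retKernel {ε : ℝ} {g : ℝ → ℝ} (hg : IsPulse g) (T t : ℝ) (x₁ : E3)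
    (hε : 0 < ε) : Integrable (retKernel ε T x₁ g t) :=
  (hg.continuous_retKernel_slice T t x₁ hε).integrable_of_hasCompactSupport
    (.intro (isCompact_closedBall x₁ (T - t))
      fun _ hx => hg.retKernel_eq_zero_of_notMem T t x₁ hε hx)

theorem IsPulse.abs_integral_retKernel_mul_le {ε D T t : ℝ} {g : ℝ → ℝ} (hg : IsPulse g) (x₁ : E3)
    (hε : 0 < ε) (ht : t ≤ T) {L : E3 → ℝ} (hL : ∀ x, |L x| ≤ D) :
    |∫ x, retKernel ε T x₁ g t x * L x| ≤ D * ((T - t) * sphereArea) := by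
  have hD : 0 ≤ D := (abs_nonneg _).trans (hL 0)
  calc ‖∫ x, retKernel ε T x₁ g t x * L x‖
    _ ≤ ∫ x, D * retKernel ε T x₁ g t x :=
        norm_integral_le_of_norm_le ((hg.integrable_retKernel T t x₁ hε).const_mul D)
          (.of_forall fun x => by
            have hK := retKernel_nonneg T x₁ hε hg.nonneg t x
            rw [norm_mul, Real.norm_of_nonneg hK, mul_comm]
            exact mul_le_mul_of_nonneg_right (hL x) hK)
    _ ≤ D * ((T - t) * sphereArea) := by
        rw [integral_const_mul]
        exact mul_le_mul_of_nonneg_left (hg.integral_retKernel_le T x₁ hε ht) hD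

theorem IsPulse.integrable_retKernel_mul_add {ε : ℝ} {g : ℝ → ℝ} (hg : IsPulse g) (T t : ℝ)
    (x₁ : E3) (hε : 0 < ε) (μ : ℝ) :
    Integrable fun x => retKernel ε T x₁ g t x * ((softDist ε x₁ x)⁻¹ + μ) := by
  simp only [mul_add]
  exact (hg.integrable_retKernel_mul_inv T t x₁ hε).add
    ((hg.integrable_retKernel T t x₁ hε).mul_const μ)

theorem IsPulse.integral_retKernel_mul_add_le {ε T t μ : ℝ} {g : ℝ → ℝ} (hg : IsPulse g) (x₁ : E3)
    (hε : 0 < ε) (ht : t ≤ T) (hμ : 0 ≤ μ) :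
    ∫ x, retKernel ε T x₁ g t x * ((softDist ε x₁ x)⁻¹ + μ) ≤ sphereArea * (1 + (T - t) * μ) := by
  simp only [mul_add]
  rw [integral_add (hg.integrable_retKernel_mul_inv T t x₁ hε)
    ((hg.integrable_retKernel T t x₁ hε).mul_const μ), integral_mul_const]
  have hinv := hg.integral_retKernel_mul_inv_le T t x₁ hε
  have hmass := mul_le_mul_of_nonneg_right (hg.integral_retKernel_le T x₁ hε ht) hμ
  linarith

variable {τ r M D : ℝ} {e : E3} {α : E3 → ℝ} {β : E3 → E3} {E B j m : ℝ → E3 → E3}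
  {ρ : ℝ → E3 → ℝ} {F : ℝ → E3 → E3 → E3} {u : ℝ → E3 → E3 → ℝ} {ε T : ℝ} {g : ℝ → ℝ}

namespace IsCoupled

variable (h : IsCoupled τ r M D e α β E B j m ρ F u)
include h

theorem continuousOn_dualPairing (hg : IsPulse g) (hε : 0 < ε) (x₁ : E3) (hT : T < τ) :
    ContinuousOn (dualPairing α β e E B u ε T x₁ g) (Icc 0 T) := by
  have hsub {X : Type} : Icc 0 T ×ˢ (univ : Set X) ⊆ Ico 0 τ ×ˢ univ :=
    prod_mono (Icc_subset_Ico_right hT) Subset.rfl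
  have hcone {s : ℝ} (hs : s ∈ Icc 0 T) {x : E3} (hx : x ∉ closedBall x₁ T) :
      T - s ≤ ‖x - x₁‖ :=
    (sub_le_self T hs.1).trans (le_of_not_ge (mt mem_closedBall_iff_norm.2 hx))
  have hφK {s : ℝ} (hs : s ∈ Icc 0 T) {x : E3} (hx : x ∉ closedBall x₁ T) :
      retKernel ε T x₁ g s x = 0 :=
    retKernel_eq_zero T x₁ hε (fun s hs => hg.eq_zero_of_nonpos s hs.le) (hcone hs hx)
  have hE := h.maxwell.contDiffOn_electric.continuousOn.mono hsub
  have hB := h.maxwell.contDiffOn_magnetic.continuousOn.mono hsub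
  have hu := h.transported.contDiffOn.continuousOn.mono hsub
  have hE₀ : ContinuousOn (fun p : ℝ × E3 => E 0 p.2) (Icc 0 T ×ˢ univ) :=
    (h.contDiff_initial.continuous.comp continuous_snd).continuousOn
  have hψ := (contDiff_retKernel T x₁ hε hg.contDiff_deriv).continuous.continuousOn
    (s := Icc 0 T ×ˢ univ)
  have hG := (isBoundedBilinearMap_cross3.continuous.comp ((contDiff_uncurry_gradient (n := 1)
    (contDiff_retKernel T x₁ hε hg.contDiff)).continuous.prodMk
      (continuous_const (y := e)))).continuousOn (s := Icc 0 T ×ˢ univ)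
  have hW := (contDiff_kineticKernel T x₁ h.contDiff_weight h.contDiff_vectorWeight hε
    (hg.contDiff.of_le one_le_two)).continuous.continuousOn (s := Icc 0 T ×ˢ univ)
  refine .add (continuousOn_integral_of_compact_support (isCompact_closedBall x₁ T)
      ((hψ.neg.mul ((hE.sub hE₀).inner continuousOn_const)).sub (hB.inner hG)) ?_)
    (continuousOn_integral_of_compact_support ((isCompact_closedBall x₁ T).prod
      (isCompact_closedBall (0 : E3) r)) (hu.mul hW) ?_)
  · intro s x hs hx
    rw [hg.retKernel_deriv_eq_zero hε (hcone hs hx), hg.gradient_retKernel_eq_zero hε (hcone hs hx),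
      cross3_zero_left, inner_zero_right, neg_zero, zero_mul, sub_zero]
  · intro s p hs hp
    by_cases hx : p.1 ∈ closedBall x₁ T
    · rw [h.transported.eq_zero_of_lt_norm s (Icc_subset_Ico_right hT hs) _ _
        (by simpa [hx] using hp), zero_mul]
    · rw [kineticKernel, hφK hs hx, mul_zero, mul_zero]

theorem density_bound_nonneg (hτ : 0 < τ) : 0 ≤ M :=
  (abs_nonneg _).trans (h.abs_density_le 0 ⟨le_rfl, hτ⟩ 0 0)

theorem abs_integral_density_mul_le {t : ℝ} (ht : t ∈ Ico 0 τ) {R : E3 × E3 → ℝ} {κ : E3 → ℝ}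
    (hκ : Integrable κ) (hR : ∀ p, ‖p.2‖ ≤ r → |R p| ≤ κ p.1) :
    |∫ p, u t p.1 p.2 * R p| ≤ M * volume.real (closedBall (0 : E3) r) * ∫ x, κ x :=
  abs_integral_prod_mul_le (ν := volume) (u := fun p => u t p.1 p.2) measurableSet_closedBall
    measure_closedBall_lt_top.ne hκ (fun p => h.abs_density_le t ht p.1 p.2)
    (fun p hp => h.transported.eq_zero_of_lt_norm t ht p.1 p.2
      (not_le.1 (mt mem_closedBall_zero_iff.2 hp)))
    (fun p hp => hR p (mem_closedBall_zero_iff.1 hp))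

theorem abs_dualPairing_zero_le (hg : IsPulse g) (hε : 0 < ε) (x₁ : E3) (hT : T ∈ Ico 0 τ) {C : ℝ}
    (hC : 0 ≤ C)
    (hW : ∀ x ξ, ‖ξ‖ ≤ r → |kineticKernel α β ε T x₁ g (0, x, ξ)| ≤ C * retKernel ε T x₁ g 0 x) :
    |dualPairing α β e E B u ε T x₁ g 0|
      ≤ (D + M * volume.real (closedBall (0 : E3) r) * C) * (T * sphereArea) := by
  have hτ : 0 < τ := hT.1.trans_lt hT.2
  have h0 : (0 : ℝ) ∈ Ico 0 τ := ⟨le_rfl, hτ⟩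
  have hM := h.density_bound_nonneg hτ
  have hφ : ContDiff ℝ 1 (retKernel ε T x₁ g 0) :=
    contDiff_slice (contDiff_retKernel T x₁ hε (hg.contDiff.of_le one_le_two)) 0
  have hφc : HasCompactSupport (retKernel ε T x₁ g 0) :=
    .intro (isCompact_closedBall x₁ (T - 0)) fun _ hx => hg.retKernel_eq_zero_of_notMem T 0 x₁ hε hx
  have hmass := hg.integral_retKernel_le T x₁ hε hT.1
  have hcurl := hg.abs_integral_retKernel_mul_le x₁ hε hT.1 h.abs_curl3_initial_le
  have hkinetic := h.abs_integral_density_mul_le h0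
    (R := fun p => kineticKernel α β ε T x₁ g (0, p))
    ((hg.integrable_retKernel T 0 x₁ hε).const_mul C) (fun p hp => hW p.1 p.2 hp)
  rw [integral_mul_inner_curl3 hφ hφc (h.maxwell.contDiff_magnetic h0)] at hcurl
  rw [sub_zero] at hcurl hmass
  simp only [dualPairing, sub_self, inner_zero_left, mul_zero, zero_sub, integral_neg]
  rw [integral_const_mul] at hkinetic
  calc _ ≤ D * (T * sphereArea) + M * volume.real (closedBall (0 : E3) r)
          * (C * ∫ x, retKernel ε T x₁ g 0 x) :=
        (abs_add_le _ _).trans (add_le_add (by rwa [abs_neg]) hkinetic)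
    _ ≤ D * (T * sphereArea) + M * volume.real (closedBall (0 : E3) r)
          * (C * (T * sphereArea)) := by gcongr
    _ = _ := by ring

theorem abs_dualRemainder_le (hg : IsPulse g) (hε : 0 < ε) (x₁ : E3) {t : ℝ} (ht : t ∈ Ico 0 τ)
    (htT : t ≤ T) {C μ : ℝ} (hC : 0 ≤ C) (hμ : 0 ≤ μ)
    (hW : ∀ x ξ η, ‖ξ‖ ≤ r → |fderiv ℝ (kineticKernel α β ε T x₁ g) (t, x, ξ) (1, vrel ξ, η)
      - (α ξ * -retKernel ε T x₁ (deriv g) t x + ⟪gradient (retKernel ε T x₁ g t) x, β ξ⟫)|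
      ≤ C * (retKernel ε T x₁ g t x * ((softDist ε x₁ x)⁻¹ + ‖η‖)))
    (hF : ∀ x ∈ closedBall x₁ (T - t), ∀ ξ, ‖ξ‖ ≤ r → ‖F t x ξ‖ ≤ μ) :
    |dualRemainder α β e E F u ε T x₁ g t|
      ≤ M * volume.real (closedBall (0 : E3) r) * (C * (sphereArea * (1 + (T - t) * μ)))
        + D * ((T - t) * sphereArea) := by
  have hM := h.density_bound_nonneg (ht.1.trans_lt ht.2)
  have hkinetic := h.abs_integral_density_mul_le ht
    (R := fun p => fderiv ℝ (kineticKernel α β ε T x₁ g) (t, p) (1, vrel p.2, F t p.1 p.2)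
      - (α p.2 * -retKernel ε T x₁ (deriv g) t p.1
        + ⟪gradient (retKernel ε T x₁ g t) p.1, β p.2⟫))
    ((hg.integrable_retKernel_mul_add T t x₁ hε μ).const_mul C)
    (fun p hp => (hW p.1 p.2 (F t p.1 p.2) hp).trans
      (mul_le_mul_of_nonneg_left ?_ hC))
  · rw [integral_const_mul] at hkinetic
    refine (abs_sub _ _).trans (add_le_add (hkinetic.trans ?_)
      (hg.abs_integral_retKernel_mul_le x₁ hε htT h.abs_laplacian_initial_le))
    gcongr
    exact hg.integral_retKernel_mul_add_le x₁ hε htT hμ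
  by_cases hx : p.1 ∈ closedBall x₁ (T - t)
  · exact mul_le_mul_of_nonneg_left (add_le_add_right (hF p.1 hx p.2 hp) _)
      (retKernel_nonneg T x₁ hε hg.nonneg t p.1)
  · rw [hg.retKernel_eq_zero_of_notMem T t x₁ hε hx, zero_mul, zero_mul]

theorem continuousOn_inner_sub_initial (hT : T < τ) :
    ContinuousOn (Function.uncurry fun t x => ⟪E t x - E 0 x, e⟫) (Icc 0 T ×ˢ univ) :=
  ((h.maxwell.contDiffOn_electric.continuousOn.mono
    (prod_mono (Icc_subset_Ico_right hT) Subset.rfl)).sub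
      (h.contDiff_initial.continuous.comp continuous_snd).continuousOn).inner continuousOn_const

theorem continuousOn_integral_boxKernel (hg : IsPulse g) (hε : 0 < ε) (x₁ : E3) (hT : T < τ) :
    ContinuousOn (fun t => ∫ x, boxKernel ε T x₁ g t x * ⟪E t x - E 0 x, e⟫) (Icc 0 T) :=
  continuousOn_integral_of_compact_support (isCompact_closedBall x₁ T)
    ((hg.continuous_boxKernel hε T x₁).continuousOn.mul (h.continuousOn_inner_sub_initial hT))
    fun t x ht hx => by
      rw [hg.boxKernel_eq_zero hε
        ((sub_le_self T ht.1).trans (le_of_not_ge (mt mem_closedBall_iff_norm.2 hx))), zero_mul]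

theorem abs_integral_boxKernel_le (hg : IsPulse g) (hε : 0 < ε) (x₁ : E3) (hT : T ∈ Ico 0 τ)
    {C : ℝ} (hC : 0 ≤ C) (hker : ∀ t x ξ, ‖ξ‖ ≤ r →
      |kineticKernel α β ε T x₁ g (t, x, ξ)| ≤ C * retKernel ε T x₁ g t x ∧
      ∀ η, |fderiv ℝ (kineticKernel α β ε T x₁ g) (t, x, ξ) (1, vrel ξ, η)
        - (α ξ * -retKernel ε T x₁ (deriv g) t x + ⟪gradient (retKernel ε T x₁ g t) x, β ξ⟫)|
        ≤ C * (retKernel ε T x₁ g t x * ((softDist ε x₁ x)⁻¹ + ‖η‖)))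
    {μ : ℝ → ℝ} (hμ : Continuous μ) (hμ0 : ∀ t ∈ Icc 0 T, 0 ≤ μ t)
    (hF : ∀ p ∈ backwardCone T x₁, ∀ ξ, ‖ξ‖ ≤ r → ‖F p.1 p.2 ξ‖ ≤ μ p.1) :
    |∫ t in 0..T, ∫ x, boxKernel ε T x₁ g t x * ⟪E t x - E 0 x, e⟫|
      ≤ (D + M * volume.real (closedBall (0 : E3) r) * C) * sphereArea * (1 + τ)
        * (1 + T + ∫ t in 0..T, μ t) := by
  set A := (D + M * volume.real (closedBall (0 : E3) r) * C) * sphereArea * (1 + τ)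
  have hτ : 0 < τ := hT.1.trans_lt hT.2
  have hS := sphereArea_nonneg
  have hM := h.density_bound_nonneg hτ
  have hD : 0 ≤ D := (abs_nonneg _).trans (h.abs_initial_le 0)
  have hinitial : |dualPairing α β e E B u ε T x₁ g 0| ≤ A :=
    calc _ ≤ (D + M * volume.real (closedBall (0 : E3) r) * C) * (T * sphereArea) :=
          h.abs_dualPairing_zero_le hg hε x₁ hT hC fun x ξ hξ => (hker 0 x ξ hξ).1
      _ ≤ (D + M * volume.real (closedBall (0 : E3) r) * C) * ((1 + τ) * sphereArea) := by
          gcongr; linarith [hT.2]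
      _ = A := by ring
  have hremainder : ∀ t ∈ Ioo 0 T, |dualRemainder α β e E F u ε T x₁ g t| ≤ A * (1 + μ t) :=
    fun t ht => by
      have hμt := hμ0 t (Ioo_subset_Icc_self ht)
      have hle := h.abs_dualRemainder_le hg hε x₁ ⟨ht.1.le, ht.2.trans hT.2⟩ ht.2.le hC hμt
        (fun x ξ η hξ => (hker t x ξ hξ).2 η) fun x hx ξ hξ =>
          hF (t, x) ⟨Ioo_subset_Icc_self ht, mem_closedBall_iff_norm.1 hx⟩ ξ hξ
      have hweight : 1 + (T - t) * μ t ≤ (1 + τ) * (1 + μ t) := by nlinarith [ht.1, hT.2]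
      have hheight : T - t ≤ (1 + τ) * (1 + μ t) := by nlinarith [ht.1, hT.2]
      calc _ ≤ M * volume.real (closedBall (0 : E3) r) * (C * (sphereArea * ((1 + τ) * (1 + μ t))))
            + D * ((1 + τ) * (1 + μ t) * sphereArea) := hle.trans (by gcongr)
        _ = A * (1 + μ t) := by ring
  have hmain := abs_sub_sub_integral_le hT.1 (h.continuousOn_dualPairing hg hε x₁ hT.2)
    (h.continuousOn_integral_boxKernel hg hε x₁ hT.2) (m := fun t => A * (1 + μ t)) (by fun_prop)
    (fun t ht => h.hasDerivAt_dualPairing hg hε x₁ ⟨ht.1, ht.2.trans hT.2⟩)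
    fun t ht => by simpa using hremainder t ht
  rw [dualPairing_self hg hε, intervalIntegral.integral_const_mul, intervalIntegral.integral_add
    intervalIntegrable_const (hμ.intervalIntegrable 0 T), integral_one] at hmain
  grind

theorem exists_abs_inner_le (hτ : 0 < τ) : ∃ C, 0 ≤ C ∧ ∀ T ∈ Ico 0 τ, ∀ x₁ μ, Continuous μ →
    (∀ t ∈ Icc 0 T, 0 ≤ μ t) →
    (∀ p ∈ backwardCone T x₁, ∀ ξ, ‖ξ‖ ≤ r → ‖F p.1 p.2 ξ‖ ≤ μ p.1) →
    |⟪E T x₁, e⟫| ≤ C * (1 + ∫ t in 0..T, μ t) := by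
  obtain ⟨C, hC, hker⟩ := exists_kineticKernel_bound h.contDiff_weight h.contDiff_vectorWeight r
  set A := (D + M * volume.real (closedBall (0 : E3) r) * C) * sphereArea * (1 + τ)
  have hS := sphereArea_nonneg
  have hb := bubbleMass_pos
  have hM := h.density_bound_nonneg hτ
  have hD : 0 ≤ D := (abs_nonneg _).trans (h.abs_initial_le 0)
  have hA : 0 ≤ A := by positivity
  refine ⟨(3 * bubbleMass)⁻¹ * (A * (1 + τ)) + D,
    add_nonneg (mul_nonneg (by positivity) (mul_nonneg hA (by positivity))) hD,
    fun T hT x₁ μ hμ hμ0 hF => ?_⟩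
  have hI : 0 ≤ ∫ t in 0..T, μ t := intervalIntegral.integral_nonneg hT.1 hμ0
  have hincrement : |⟪E T x₁ - E 0 x₁, e⟫|
      ≤ (3 * bubbleMass)⁻¹ * (A * (1 + T + ∫ t in 0..T, μ t)) := by
    rcases hT.1.eq_or_lt with rfl | hT0
    · rw [sub_self, inner_zero_left, abs_zero]
      positivity
    · exact abs_le_of_forall_boxKernel (h.continuousOn_inner_sub_initial hT.2) x₁ hT0
        fun g hg ε hε => h.abs_integral_boxKernel_le hg hε x₁ hT hC
          (hker ε hε T x₁ g (hg.contDiff.of_le one_le_two) hg.nonneg) hμ hμ0 hF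
  have hweight : 1 + T + ∫ t in 0..T, μ t ≤ (1 + τ) * (1 + ∫ t in 0..T, μ t) := by
    nlinarith [hT.2]
  calc |⟪E T x₁, e⟫|
    _ = |⟪E T x₁ - E 0 x₁, e⟫ + ⟪E 0 x₁, e⟫| := by rw [← inner_add_left, sub_add_cancel]
    _ ≤ (3 * bubbleMass)⁻¹ * (A * (1 + T + ∫ t in 0..T, μ t)) + D :=
        (abs_add_le _ _).trans (add_le_add hincrement (h.abs_initial_le x₁))
    _ ≤ (3 * bubbleMass)⁻¹ * (A * ((1 + τ) * (1 + ∫ t in 0..T, μ t)))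
          + D * (1 + ∫ t in 0..T, μ t) := by
        gcongr
        exact le_mul_of_one_le_right hD (by linarith)
    _ = _ := by ring

end IsCoupled

end ComponentBound

section VlasovMaxwell

/-- A solution `(f, E, B)` on `[0, τ)` of the relativistic Vlasov–Maxwell system. -/
structure IsVlasovMaxwellSolution (τ : ℝ) (f : ℝ → E3 → E3 → ℝ) (E B : ℝ → E3 → E3) : Prop where
  contDiffOn_density : ContDiffOn ℝ 1 (fun p : ℝ × E3 × E3 => f p.1 p.2.1 p.2.2) (Ico 0 τ ×ˢ univ)
  contDiffOn_electric : ContDiffOn ℝ 1 (Function.uncurry E) (Ico 0 τ ×ˢ univ)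
  contDiffOn_magnetic : ContDiffOn ℝ 1 (Function.uncurry B) (Ico 0 τ ×ˢ univ)
  vlasov : ∀ t ∈ Ioo 0 τ, ∀ x ξ, deriv (fun s => f s x ξ) t
    + ⟪vrel ξ, gradient (fun y => f t y ξ) x⟫
      = -∑ i, fderiv ℝ (fun η => lorentzForce (E t x) (B t x) η i * f t x η) ξ (e3 i)
  ampere : ∀ t ∈ Ioo 0 τ, ∀ x, deriv (fun s => E s x) t - curl3 (B t) x = -∫ ξ, f t x ξ • vrel ξ
  gauss_electric : ∀ t ∈ Ioo 0 τ, ∀ x, divg (E t) x = ∫ ξ, f t x ξ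
  faraday : ∀ t ∈ Ioo 0 τ, ∀ x, deriv (fun s => B s x) t + curl3 (E t) x = 0
  gauss_magnetic : ∀ t ∈ Ioo 0 τ, ∀ x, divg (B t) x = 0

/-- A `C²` vector field `a` such that `a`, its curl and its componentwise Laplacian are bounded by
`D`; this is what the estimate requires of the initial fields. -/
structure IsBoundedInitialField (D : ℝ) (a : E3 → E3) : Prop where
  contDiff : ContDiff ℝ 2 a
  norm_le : ∀ x, ‖a x‖ ≤ D
  norm_curl3_le : ∀ x, ‖curl3 a x‖ ≤ D
  abs_laplacian_le : ∀ i x, |divg (gradient fun y => ⟪a y, e3 i⟫) x| ≤ D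

section InitialData

variable {D : ℝ} {a : E3 → E3}

theorem IsBoundedInitialField.mono {D' : ℝ} (ha : IsBoundedInitialField D a) (hD : D ≤ D') :
    IsBoundedInitialField D' a :=
  ⟨ha.contDiff, fun x => (ha.norm_le x).trans hD, fun x => (ha.norm_curl3_le x).trans hD,
    fun i x => (ha.abs_laplacian_le i x).trans hD⟩

theorem curl3_neg (ha : Differentiable ℝ a) (x : E3) : curl3 (-a) x = -curl3 a x := by
  simp only [curl3_eq_sum ha.neg.differentiableAt, curl3_eq_sum ha.differentiableAt, fderiv_neg,
    neg_apply, Fin.sum_univ_three]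
  ext i
  fin_cases i <;> simp [cross3] <;> ring

theorem hasCompactSupport_curl3 (ha : Differentiable ℝ a) (hc : HasCompactSupport a) :
    HasCompactSupport (curl3 a) :=
  (hc.fderiv (𝕜 := ℝ)).mono fun x hx hx' =>
    hx (by simp [curl3_eq_sum ha.differentiableAt, hx', cross3_zero_right])

theorem exists_isBoundedInitialField (ha : ContDiff ℝ 2 a) (hc : HasCompactSupport a) :
    ∃ D, IsBoundedInitialField D a := by
  have ha₁ : ContDiff ℝ 1 a := ha.of_le one_le_two
  have hgrad (i : Fin 3) : ContDiff ℝ 1 (gradient fun y => ⟪a y, e3 i⟫) :=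
    contDiff_gradient (ha.inner ℝ contDiff_const)
  have hgradc (i : Fin 3) : HasCompactSupport (gradient fun y => ⟪a y, e3 i⟫) :=
    (hc.comp_left (g := fun v => ⟪v, e3 i⟫) (inner_zero_left _)).mono'
      ((subset_tsupport _).trans (tsupport_gradient_subset _))
  obtain ⟨D₀, hD₀⟩ := hc.exists_bound_of_continuous ha.continuous
  obtain ⟨D₁, hD₁⟩ := (hasCompactSupport_curl3 (ha₁.differentiable one_ne_zero)
    hc).exists_bound_of_continuous (continuous_curl3 ha₁)
  choose D₂ hD₂ using fun i => (hasCompactSupport_divg (hgrad i)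
    (hgradc i)).exists_bound_of_continuous (continuous_divg (hgrad i))
  have hle (i : Fin 3) : D₂ i ≤ Finset.univ.sup' Finset.univ_nonempty D₂ :=
    Finset.le_sup' D₂ (Finset.mem_univ i)
  exact ⟨max (max D₀ D₁) (Finset.univ.sup' Finset.univ_nonempty D₂), ha,
    fun x => (hD₀ x).trans (le_max_of_le_left (le_max_left _ _)),
    fun x => (hD₁ x).trans (le_max_of_le_left (le_max_right _ _)),
    fun i x => (hD₂ i x).trans ((hle i).trans (le_max_right _ _))⟩

end InitialData

theorem inner_gradient_add_sum_fderiv_lorentzForce {f : E3 → E3 → ℝ} {x ξ : E3}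
    (hf : DifferentiableAt ℝ (Function.uncurry f) (x, ξ)) (E B : E3) :
    ⟪vrel ξ, gradient (fun y => f y ξ) x⟫
        + ∑ i, fderiv ℝ (fun η => lorentzForce E B η i * f x η) ξ (e3 i)
      = fderiv ℝ (Function.uncurry f) (x, ξ) (vrel ξ, lorentzForce E B ξ) := by
  have hx : HasFDerivAt (fun y => f y ξ) _ x :=
    hf.hasFDerivAt.comp (f := fun y => (y, ξ)) x (hasFDerivAt_prodMk_left x ξ)
  have hξ : HasFDerivAt (f x) _ ξ :=
    hf.hasFDerivAt.comp (f := fun η => (x, η)) ξ (hasFDerivAt_prodMk_right x ξ)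
  have hdiv : ∑ i, fderiv ℝ (fun η => lorentzForce E B η i * f x η) ξ (e3 i)
      = fderiv ℝ (f x) ξ (lorentzForce E B ξ) := by
    calc _ = divg (fun η => f x η • lorentzForce E B η) ξ :=
          Finset.sum_congr rfl fun i _ => by simp [pd3, mul_comm]
      _ = _ := by
          rw [divg_smul hξ.differentiableAt
            ((contDiff_lorentzForce E B (n := 1)).differentiable one_ne_zero ξ),
            divg_lorentzForce, mul_zero, zero_add]
  rw [hdiv, real_inner_comm, inner_gradient_left, hx.fderiv, hξ.fderiv]
  simp [← map_add]

theorem integrable_smul_of_eq_zero_of_lt_norm {G : Type*} [NormedAddCommGroup G] [NormedSpace ℝ G]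
    {r : ℝ} {u : E3 → ℝ} {w : E3 → G} (hu : Continuous u) (hr : ∀ ξ, r < ‖ξ‖ → u ξ = 0)
    (hw : Continuous w) : Integrable fun ξ => u ξ • w ξ :=
  (hu.smul hw).integrable_of_hasCompactSupport (.intro (isCompact_closedBall 0 r) fun ξ hξ => by
    rw [Pi.smul_apply', hr ξ (by simpa using hξ), zero_smul])

theorem hasDerivAt_of_contDiffOn {τ t : ℝ} {F : ℝ → E3 → E3}
    (hF : ContDiffOn ℝ 1 (Function.uncurry F) (Ico 0 τ ×ˢ univ)) (ht : t ∈ Ioo 0 τ) (x : E3) :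
    HasDerivAt (fun s => F s x) (deriv (fun s => F s x) t) t :=
  (((hF.contDiffAt (prod_mem_nhds (Ico_mem_nhds ht.1 ht.2) univ_mem)).differentiableAt
    one_ne_zero).comp (f := fun s => (s, x)) t (by fun_prop)).hasDerivAt

namespace IsVlasovMaxwellSolution

variable {τ r M D : ℝ} {f : ℝ → E3 → E3 → ℝ} {E B : ℝ → E3 → E3}
  (h : IsVlasovMaxwellSolution τ f E B)

include h

theorem transport {t : ℝ} (ht : t ∈ Ioo 0 τ) (x ξ : E3) :
    fderiv ℝ (fun p : ℝ × E3 × E3 => f p.1 p.2.1 p.2.2) (t, x, ξ)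
      (1, vrel ξ, lorentzForce (E t x) (B t x) ξ) = 0 := by
  have hf := ((h.contDiffOn_density.contDiffAt (prod_mem_nhds (Ico_mem_nhds ht.1 ht.2)
    univ_mem)).differentiableAt one_ne_zero (x := (t, x, ξ))).hasFDerivAt
  have htime : HasDerivAt (fun s => f s x ξ) _ t :=
    hf.comp_hasDerivAt (f := fun s => (s, x, ξ)) t
      ((hasDerivAt_id t).prodMk (hasDerivAt_const t (x, ξ)))
  have hphase : HasFDerivAt (Function.uncurry (f t)) _ (x, ξ) :=
    hf.comp (f := fun q => (t, q)) (x, ξ) (hasFDerivAt_prodMk_right t (x, ξ))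
  have hV := eq_neg_iff_add_eq_zero.1 (h.vlasov t ht x ξ)
  rw [add_assoc, inner_gradient_add_sum_fderiv_lorentzForce hphase.differentiableAt, htime.deriv,
    hphase.fderiv] at hV
  simpa [← map_add] using hV

theorem isTransported (hr : ∀ t ∈ Ico 0 τ, ∀ x ξ, r < ‖ξ‖ → f t x ξ = 0) :
    IsTransported τ r (fun t x => lorentzForce (E t x) (B t x)) f where
  contDiffOn := h.contDiffOn_density
  eq_zero_of_lt_norm := hr
  continuous_force t ht := by
    have hE : Continuous (E t) := h.contDiffOn_electric.continuousOn.comp_continuous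
      (f := fun x => (t, x)) (by fun_prop) fun _ => ⟨⟨ht.1.le, ht.2⟩, mem_univ _⟩
    have hB : Continuous (B t) := h.contDiffOn_magnetic.continuousOn.comp_continuous
      (f := fun x => (t, x)) (by fun_prop) fun _ => ⟨⟨ht.1.le, ht.2⟩, mem_univ _⟩
    exact (hE.comp continuous_fst).add (isBoundedBilinearMap_cross3.continuous.comp
      (((contDiff_vrel (n := 1)).continuous.comp continuous_snd).prodMk
        (hB.comp continuous_fst)))
  contDiff_force t x := contDiff_lorentzForce _ _
  divg_force t x := divg_lorentzForce _ _
  transport _ ht := h.transport ht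

theorem abs_density_le (hM : ∀ x ξ, |f 0 x ξ| ≤ M)
    (hr : ∀ t ∈ Ico 0 τ, ∀ x ξ, r < ‖ξ‖ → f t x ξ = 0) {t : ℝ} (ht : t ∈ Ico 0 τ) (x ξ : E3) :
    |f t x ξ| ≤ M := by
  have hM₀ : 0 ≤ M := (abs_nonneg _).trans (hM 0 0)
  have hv (_ : ℝ) (_ ξ : E3) : ‖vrel ξ‖ ≤ 1 := (norm_vrel_lt_one ξ).le
  let F (t : ℝ) (x : E3) : E3 → E3 := lorentzForce (E t x) (B t x)
  refine abs_le'.2 ⟨le_of_transport_le_zero hM₀ hv (F := F) h.contDiffOn_density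
    (fun x ξ => (abs_le'.1 (hM x ξ)).1) hr (fun t ht x ξ => (h.transport ht x ξ).le) ht x ξ,
    le_of_transport_le_zero hM₀ hv (f := fun t x ξ => -f t x ξ) (F := F) h.contDiffOn_density.neg
    (fun x ξ => (abs_le'.1 (hM x ξ)).2) (fun t ht x ξ hξ => neg_eq_zero.2 (hr t ht x ξ hξ))
    (fun t ht x ξ => ?_) ht x ξ⟩
  rw [fderiv_fun_neg, neg_apply, h.transport ht, neg_zero]

theorem isMaxwellSolution_electric :
    IsMaxwellSolution τ E B (fun t x => ∫ ξ, f t x ξ • vrel ξ) 0 (fun t x => ∫ ξ, f t x ξ) where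
  contDiffOn_electric := h.contDiffOn_electric
  contDiffOn_magnetic := h.contDiffOn_magnetic
  hasDerivAt_electric t ht x := (hasDerivAt_of_contDiffOn h.contDiffOn_electric ht x).congr_deriv
    (by rw [sub_eq_iff_eq_add.1 (h.ampere t ht x)]; abel)
  hasDerivAt_magnetic t ht x := (hasDerivAt_of_contDiffOn h.contDiffOn_magnetic ht x).congr_deriv
    (by rw [eq_neg_of_add_eq_zero_left (h.faraday t ht x)]; simp)
  divg_electric := h.gauss_electric

theorem isMaxwellSolution_magnetic :
    IsMaxwellSolution τ B (-E) 0 (fun t x => -∫ ξ, f t x ξ • vrel ξ) 0 where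
  contDiffOn_electric := h.contDiffOn_magnetic
  contDiffOn_magnetic := h.contDiffOn_electric.neg
  hasDerivAt_electric t ht x := (h.isMaxwellSolution_electric.hasDerivAt_magnetic t ht
    x).congr_deriv (by
      have hE : Differentiable ℝ (E t) := (h.isMaxwellSolution_electric.contDiff_electric
        ⟨ht.1.le, ht.2⟩).differentiable one_ne_zero
      simp [curl3_neg hE])
  hasDerivAt_magnetic t ht x := (h.isMaxwellSolution_electric.hasDerivAt_electric t ht
    x).neg.congr_deriv (by abel)
  divg_electric := h.gauss_magnetic

variable (hr : ∀ t ∈ Ico 0 τ, ∀ x ξ, r < ‖ξ‖ → f t x ξ = 0) (hM : ∀ x ξ, |f 0 x ξ| ≤ M)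

include hr

theorem integrable_density_smul {G : Type*} [NormedAddCommGroup G] [NormedSpace ℝ G] {w : E3 → G}
    (hw : Continuous w) {t : ℝ} (ht : t ∈ Ioo 0 τ) (x : E3) :
    Integrable fun ξ => f t x ξ • w ξ :=
  have ht' : t ∈ Ico 0 τ := ⟨ht.1.le, ht.2⟩
  integrable_smul_of_eq_zero_of_lt_norm
    (((h.isTransported hr).continuous_slice ht').comp (.prodMk_right x)) (hr t ht' x) hw

include hM

theorem isCoupled_electric (hE : IsBoundedInitialField D (E 0))
    (hB : IsBoundedInitialField D (B 0)) (i : Fin 3) :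
    IsCoupled τ r M D (e3 i) (fun ξ => ⟪vrel ξ, e3 i⟫) (fun _ => e3 i) E B
      (fun t x => ∫ ξ, f t x ξ • vrel ξ) 0 (fun t x => ∫ ξ, f t x ξ)
      (fun t x => lorentzForce (E t x) (B t x)) f where
  maxwell := h.isMaxwellSolution_electric
  transported := h.isTransported hr
  abs_density_le _ ht := h.abs_density_le hM hr ht
  contDiff_weight := contDiff_vrel.inner ℝ contDiff_const
  contDiff_vectorWeight := contDiff_const
  current t ht x := by
    rw [real_inner_comm, ← integral_inner (h.integrable_density_smul hr
      (contDiff_vrel (n := 1)).continuous ht x)]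
    simp_rw [real_inner_smul_right, real_inner_comm]
  charge t _ x := by simp [cross3_zero_right, integral_smul_const]
  contDiff_initial := hE.contDiff
  abs_initial_le x := (abs_real_inner_le_norm _ _).trans (by simpa [norm_e3] using hE.norm_le x)
  abs_curl3_initial_le x :=
    (abs_real_inner_le_norm _ _).trans (by simpa [norm_e3] using hB.norm_curl3_le x)
  abs_laplacian_initial_le := hE.abs_laplacian_le i

theorem isCoupled_magnetic (hE : IsBoundedInitialField D (E 0))
    (hB : IsBoundedInitialField D (B 0)) (i : Fin 3) :
    IsCoupled τ r M D (e3 i) 0 (fun ξ => cross3 (e3 i) (vrel ξ)) B (-E) 0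
      (fun t x => -∫ ξ, f t x ξ • vrel ξ) 0 (fun t x => lorentzForce (E t x) (B t x)) f where
  maxwell := h.isMaxwellSolution_magnetic
  transported := h.isTransported hr
  abs_density_le _ ht := h.abs_density_le hM hr ht
  contDiff_weight := contDiff_const
  contDiff_vectorWeight := contDiff_cross3 contDiff_const contDiff_vrel
  current t _ x := by simp
  charge t ht x := by
    have := (isBoundedBilinearMap_cross3.toContinuousLinearMap (e3 i)).integral_comp_comm
      (h.integrable_density_smul hr (contDiff_vrel (n := 1)).continuous ht x)
    simp only [map_smul, IsBoundedBilinearMap.toContinuousLinearMap_apply] at this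
    simp [this, cross3_neg_right]
  contDiff_initial := hB.contDiff
  abs_initial_le x := (abs_real_inner_le_norm _ _).trans (by simpa [norm_e3] using hB.norm_le x)
  abs_curl3_initial_le x := (abs_real_inner_le_norm _ _).trans (by
    simpa [norm_e3, curl3_neg (hE.contDiff.differentiable two_ne_zero)] using hE.norm_curl3_le x)
  abs_laplacian_initial_le := hB.abs_laplacian_le i

theorem exists_norm_add_norm_le (hτ : 0 < τ) (hE : IsBoundedInitialField D (E 0))
    (hB : IsBoundedInitialField D (B 0)) :
    ∃ C, 0 < C ∧ ∀ T ∈ Ico 0 τ, ∀ x₀ μ, Continuous μ →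
      (∀ p ∈ backwardCone T x₀, ‖E p.1 p.2‖ + ‖B p.1 p.2‖ ≤ μ p.1) →
      ‖E T x₀‖ + ‖B T x₀‖ ≤ C * (1 + ∫ t in 0..T, μ t) := by
  choose CE hCE hstepE using fun i => (h.isCoupled_electric hr hM hE hB i).exists_abs_inner_le hτ
  choose CB hCB hstepB using fun i => (h.isCoupled_magnetic hr hM hE hB i).exists_abs_inner_le hτ
  have hsum : 0 ≤ ∑ i, (CE i + CB i) := Finset.sum_nonneg fun i _ => add_nonneg (hCE i) (hCB i)
  refine ⟨1 + ∑ i, (CE i + CB i), by positivity, fun T hT x₀ μ hμc hμ => ?_⟩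
  have hμ₀ (t : ℝ) (ht : t ∈ Icc 0 T) : 0 ≤ μ t :=
    (add_nonneg (norm_nonneg _) (norm_nonneg _)).trans
      (hμ (t, x₀) ⟨ht, by simpa using ht.2⟩)
  have hforce (p : ℝ × E3) (hp : p ∈ backwardCone T x₀) (ξ : E3) (_ : ‖ξ‖ ≤ r) :
      ‖lorentzForce (E p.1 p.2) (B p.1 p.2) ξ‖ ≤ μ p.1 :=
    (norm_lorentzForce_le _ _ _).trans (hμ p hp)
  have hint : 0 ≤ ∫ t in 0..T, μ t := intervalIntegral.integral_nonneg hT.1 hμ₀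
  calc ‖E T x₀‖ + ‖B T x₀‖
    _ ≤ ∑ i, |⟪E T x₀, e3 i⟫| + ∑ i, |⟪B T x₀, e3 i⟫| :=
        add_le_add (norm_le_sum_abs_inner_e3 _) (norm_le_sum_abs_inner_e3 _)
    _ ≤ ∑ i, CE i * (1 + ∫ t in 0..T, μ t) + ∑ i, CB i * (1 + ∫ t in 0..T, μ t) := by
        gcongr with i _ i _
        · exact hstepE i T hT x₀ μ hμc hμ₀ hforce
        · exact hstepB i T hT x₀ μ hμc hμ₀ hforce
    _ = (∑ i, (CE i + CB i)) * (1 + ∫ t in 0..T, μ t) := by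
        rw [Finset.sum_add_distrib, add_mul, Finset.sum_mul, Finset.sum_mul]
    _ ≤ (1 + ∑ i, (CE i + CB i)) * (1 + ∫ t in 0..T, μ t) := by gcongr; linarith

end IsVlasovMaxwellSolution

theorem field_bounded_of_momentum_support_bounded_general {τ r M D : ℝ} (hτ : 0 < τ)
    {f : ℝ → E3 → E3 → ℝ} {E B : ℝ → E3 → E3} (h : IsVlasovMaxwellSolution τ f E B)
    (hr : ∀ t ∈ Ico 0 τ, ∀ x ξ, r < ‖ξ‖ → f t x ξ = 0) (hM : ∀ x ξ, |f 0 x ξ| ≤ M)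
    (hE : IsBoundedInitialField D (E 0)) (hB : IsBoundedInitialField D (B 0)) :
    ∃ C, ∀ t ∈ Ico 0 τ, ∀ x, ‖E t x‖ + ‖B t x‖ ≤ C := by
  obtain ⟨C, hC, hstep⟩ := h.exists_norm_add_norm_le hr hM hτ hE hB
  refine ⟨2 * C * exp (2 * C * τ), fun t ht x => ?_⟩
  calc ‖E t x‖ + ‖B t x‖
    _ ≤ 2 * C * exp (2 * C * t) := le_exp_of_forall_backwardCone_le hC
        (Y := fun t x => ‖E t x‖ + ‖B t x‖)
        (h.contDiffOn_electric.continuousOn.norm.add h.contDiffOn_magnetic.continuousOn.norm)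
        (fun _ _ => by positivity) hstep ht x
    _ ≤ 2 * C * exp (2 * C * τ) := by gcongr; exact ht.2.le

end VlasovMaxwell

/-- **Boundedness of the electromagnetic field under a momentum support bound**: if the
momentum support radius of a `C¹` solution of the relativistic Vlasov–Maxwell system
remains bounded on `[0,τ)`, then the field `(E,B)` is bounded on `[0,τ) × ℝ³`. -/
theorem field_bounded_of_momentum_support_bounded
    (τ : ℝ) (hτ : 0 < τ)
    (f : ℝ → E3 → E3 → ℝ) (Efld Bfld : ℝ → E3 → E3)
    (fin : E3 → E3 → ℝ) (Ein Bin : E3 → E3)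
    -- regularity of the solution on `[0,τ)`
    (hfreg : ContDiffOn ℝ 1 (fun p : ℝ × E3 × E3 => f p.1 p.2.1 p.2.2)
      (Set.Ico 0 τ ×ˢ (Set.univ : Set (E3 × E3))))
    (hEreg : ContDiffOn ℝ 1 (fun p : ℝ × E3 => Efld p.1 p.2)
      (Set.Ico 0 τ ×ˢ (Set.univ : Set E3)))
    (hBreg : ContDiffOn ℝ 1 (fun p : ℝ × E3 => Bfld p.1 p.2)
      (Set.Ico 0 τ ×ˢ (Set.univ : Set E3)))
    -- regularity, positivity and support of the initial data
    (hfinreg : ContDiff ℝ 1 (fun p : E3 × E3 => fin p.1 p.2))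
    (hfinpos : ∀ x ξ : E3, 0 ≤ fin x ξ)
    (hfinsupp : HasCompactSupport (fun p : E3 × E3 => fin p.1 p.2))
    (hEinreg : ContDiff ℝ 2 Ein) (hBinreg : ContDiff ℝ 2 Bin)
    (hEinsupp : HasCompactSupport Ein) (hBinsupp : HasCompactSupport Bin)
    -- initial conditions
    (hf0 : ∀ x ξ : E3, f 0 x ξ = fin x ξ)
    (hE0 : ∀ x : E3, Efld 0 x = Ein x) (hB0 : ∀ x : E3, Bfld 0 x = Bin x)
    -- integrability in the momentum variable
    (hintf : ∀ t ∈ Set.Ico 0 τ, ∀ x : E3, Integrable fun ξ : E3 => f t x ξ)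
    -- compatibility conditions on the initial data
    (hcompatE : ∀ x : E3, divg Ein x = ∫ ξ : E3, fin x ξ)
    (hcompatB : ∀ x : E3, divg Bin x = 0)
    -- the Vlasov equation
    (hVlasov : ∀ t ∈ Set.Ioo 0 τ, ∀ x ξ : E3,
      deriv (fun s => f s x ξ) t + ⟪vrel ξ, gradient (fun y => f t y ξ) x⟫
        = -∑ i : Fin 3,
            fderiv ℝ (fun η => (Efld t x + cross3 (vrel η) (Bfld t x)) i * f t x η) ξ (e3 i))
    -- the Maxwell equations
    (hAmpere : ∀ t ∈ Set.Ioo 0 τ, ∀ x : E3,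
      deriv (fun s => Efld s x) t - curl3 (Bfld t) x = -∫ ξ : E3, f t x ξ • vrel ξ)
    (hGaussE : ∀ t ∈ Set.Ioo 0 τ, ∀ x : E3, divg (Efld t) x = ∫ ξ : E3, f t x ξ)
    (hFaraday : ∀ t ∈ Set.Ioo 0 τ, ∀ x : E3,
      deriv (fun s => Bfld s x) t + curl3 (Efld t) x = 0)
    (hGaussB : ∀ t ∈ Set.Ioo 0 τ, ∀ x : E3, divg (Bfld t) x = 0)    -- bounded momentum support radius
    (hR : ∃ r : ℝ, 0 < r ∧ ∀ t ∈ Set.Ico 0 τ, ∀ x ξ : E3, r < ‖ξ‖ → f t x ξ = 0) :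
    ∃ C : ℝ, ∀ t ∈ Set.Ico 0 τ, ∀ x : E3, ‖Efld t x‖ + ‖Bfld t x‖ ≤ C := by
  obtain ⟨r, -, hr⟩ := hR
  obtain ⟨M, hM⟩ := hfinsupp.exists_bound_of_continuous hfinreg.continuous
  obtain ⟨D₁, hD₁⟩ := exists_isBoundedInitialField hEinreg hEinsupp
  obtain ⟨D₂, hD₂⟩ := exists_isBoundedInitialField hBinreg hBinsupp
  have hsol : IsVlasovMaxwellSolution τ f Efld Bfld :=
    ⟨hfreg, hEreg, hBreg, hVlasov, hAmpere, hGaussE, hFaraday, hGaussB⟩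
  refine field_bounded_of_momentum_support_bounded_general hτ hsol hr
    (fun x ξ => (congrArg _ (hf0 x ξ)).trans_le (hM (x, ξ))) (D := max D₁ D₂) ?_ ?_
  · rw [funext hE0]; exact hD₁.mono (le_max_left _ _)
  · rw [funext hB0]; exact hD₂.mono (le_max_right _ _)
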